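/- arXiv:2105.13615 — 7 statements merged into one kernel-verified Lean document; each statement's English description precedes it below -/
import Mathlib

section
/- For every n ≥ 1, every essential cover of the n-dimensional hypercube consists of at least (1/2)(√(4n+1) + 1) hyperplanes. -/
open scoped Classical

/-- Hyperplanes with normals `v i` and constants `μ i` form an essential cover of the
`n`-dimensional hypercube `{-1,1}^n`. -/
def IsEssentialCover (n k : ℕ) (v : Fin k → Fin n → ℝ) (μ : Fin k → ℝ) : Prop :=
  (∀ i, v i ≠ 0) ∧
  (∀ x : Fin n → ℝ, (∀ j, x j = 1 ∨ x j = -1) → ∃ i, ∑ j, x j * v i j = μ i) ∧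
  (∀ j, ∃ i, v i j ≠ 0) ∧
  (∀ i, ∃ x : Fin n → ℝ, (∀ j, x j = 1 ∨ x j = -1) ∧ (∑ j, x j * v i j = μ i) ∧
    ∀ i', i' ≠ i → ∑ j, x j * v i' j ≠ μ i')

/-!
Let `y` be a vertex covered by `h_i` alone, and suppose that `v_i` has support of size `s`. Among
the products `y_j v_{ij}` with `j` in the support, at least `s / 2` have the same sign; flipping
any nonempty set of the corresponding coordinates of `y` leaves `h_i`. So the other `k - 1`
hyperplanes cover all vertices but one of a cube of dimension at least `s / 2`, whence
`s ≤ 2 (k - 1)` by the theorem of Alon and Füredi. On the other hand, every coordinate occurs in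
at least two normals: if `j` occurred only in `v_i`, flipping `y_j` would give an uncovered vertex.
Counting the pairs `(i, j)` with `v_{ij} ≠ 0` gives `2 n ≤ 2 k (k - 1)`.
-/

open Finset Matrix

section Subsets

variable {α ι R : Type*}

theorem sum_Icc_neg_one_pow_card_eq_zero [Ring R] {T P : Finset α} (hTP : #T < #P) :
    ∑ S ∈ Icc T P, (-1 : R) ^ #S = 0 := by
  by_cases hsub : T ⊆ P
  · obtain ⟨p, hp, hpT⟩ := exists_mem_notMem_of_card_lt_card hTP
    have hdisj : ∀ S ∈ (P \ T).powerset, Disjoint T S := fun S hS =>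
      disjoint_sdiff.mono_right (mem_powerset.mp hS)
    have halt : ∑ S ∈ (P \ T).powerset, (-1 : R) ^ #S = 0 := by
      exact_mod_cast congrArg (Int.cast : ℤ → R)
        (sum_powerset_neg_one_pow_card_of_nonempty ⟨p, mem_sdiff.mpr ⟨hp, hpT⟩⟩)
    have hinj : Set.InjOn (T ∪ ·) ↑(P \ T).powerset := by
      intro S hS S' hS' (h : T ∪ S = T ∪ S')
      rw [← union_sdiff_cancel_left (hdisj S hS), ← union_sdiff_cancel_left (hdisj S' hS'), h]
    calc ∑ S ∈ Icc T P, (-1 : R) ^ #S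
        = ∑ S ∈ (P \ T).powerset, (-1 : R) ^ #(T ∪ S) := by
          rw [Icc_eq_image_powerset hsub, sum_image hinj]
      _ = ∑ S ∈ (P \ T).powerset, (-1) ^ #T * (-1 : R) ^ #S :=
          sum_congr rfl fun S hS => by rw [card_union_of_disjoint (hdisj S hS), pow_add]
      _ = 0 := by rw [← mul_sum, halt, mul_zero]
  · rw [Icc_eq_empty hsub, sum_empty]

/-- Only `T = ∅` is of interest; a general lower endpoint makes the induction on `J` go through,
as a further factor `∑ j ∈ S, b i j` turns `Icc T P` into the intervals `Icc (insert j T) P`. -/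
theorem sum_Icc_neg_one_pow_card_mul_prod_eq_zero [CommRing R] (a : ι → R) (b : ι → α → R)
    (J : Finset ι) {T P : Finset α} (hTP : #T + #J < #P) :
    ∑ S ∈ Icc T P, (-1) ^ #S * ∏ i ∈ J, (a i + ∑ j ∈ S, b i j) = 0 := by
  induction J using Finset.induction_on generalizing T with
  | empty => simpa using sum_Icc_neg_one_pow_card_eq_zero (by simpa using hTP)
  | insert i J hi ih =>
    rw [card_insert_of_notMem hi] at hTP
    set F : Finset α → R := fun S => (-1) ^ #S * ∏ i ∈ J, (a i + ∑ j ∈ S, b i j)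
    calc ∑ S ∈ Icc T P, (-1) ^ #S * ∏ i ∈ insert i J, (a i + ∑ j ∈ S, b i j)
        = a i * ∑ S ∈ Icc T P, F S + ∑ S ∈ Icc T P, ∑ j ∈ S, b i j * F S := by
          rw [mul_sum, ← sum_add_distrib]
          refine sum_congr rfl fun S _ => ?_
          rw [prod_insert hi, ← sum_mul]
          ring
      _ = a i * ∑ S ∈ Icc T P, F S + ∑ j ∈ P, ∑ S ∈ Icc (insert j T) P, b i j * F S := by
          congr 1
          refine sum_comm' fun S j => ?_
          simp only [mem_Icc, insert_subset_iff]
          grind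
      _ = 0 := by
          rw [ih (by lia), mul_zero, zero_add]
          refine sum_eq_zero fun j _ => ?_
          rw [← mul_sum, ih (by have := card_insert_le j T; lia), mul_zero]

/-- The Alon–Füredi theorem for the cube, whose vertices are encoded as subsets `S` of `P` and
whose hyperplanes are the zero sets of `S ↦ a i + ∑ j ∈ S, b i j`. -/
theorem card_le_card_of_cover_nonempty_subsets [CommRing R] [IsDomain R] {a : ι → R}
    {b : ι → α → R} {J : Finset ι} {P : Finset α} (ha : ∀ i ∈ J, a i ≠ 0)
    (hcov : ∀ S ⊆ P, S.Nonempty → ∃ i ∈ J, a i + ∑ j ∈ S, b i j = 0) : #P ≤ #J := by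
  by_contra! hlt
  have halt := sum_Icc_neg_one_pow_card_mul_prod_eq_zero a b J (T := ∅) (P := P) (by simpa)
  rw [sum_eq_single_of_mem ∅ (by simp)] at halt
  · exact prod_ne_zero_iff.mpr ha (by simpa using halt)
  · intro S hS hne
    obtain ⟨i, hi, h0⟩ := hcov S (mem_Icc.mp hS).2 (nonempty_iff_ne_empty.mpr hne)
    rw [prod_eq_zero hi h0, mul_zero]

theorem exists_subset_card_le_two_mul_forall_sum_ne_zero {M : Type*} [AddCommMonoid M]
    [LinearOrder M] [IsOrderedCancelAddMonoid M] {c : α → M} {s : Finset α}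
    (hc : ∀ j ∈ s, c j ≠ 0) :
    ∃ P ⊆ s, #s ≤ 2 * #P ∧ ∀ S ⊆ P, S.Nonempty → ∑ j ∈ S, c j ≠ 0 := by
  have hcard : #{j ∈ s | 0 < c j} + #{j ∈ s | ¬0 < c j} = #s :=
    card_filter_add_card_filter_not _
  rcases le_total #{j ∈ s | ¬0 < c j} #{j ∈ s | 0 < c j} with hle | hle
  · exact ⟨{j ∈ s | 0 < c j}, filter_subset _ s, by lia, fun S hS hne =>
      (sum_pos (fun j hj => (mem_filter.mp (hS hj)).2) hne).ne'⟩
  · refine ⟨{j ∈ s | ¬0 < c j}, filter_subset _ s, by lia, fun S hS hne =>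
      (sum_neg (fun j hj => ?_) hne).ne⟩
    obtain ⟨hjs, hj⟩ := mem_filter.mp (hS hj)
    exact (not_lt.mp hj).lt_of_ne (hc j hjs)

end Subsets

/-- `x` is a vertex of the cube `{-1,1}^α`, regarded as a point of the
module `α → R` in which the hyperplanes live. -/
def IsCubeVertex {α R : Type*} [Ring R] (x : α → R) : Prop := ∀ j, x j = 1 ∨ x j = -1

section Vertices

variable {α R : Type*} [Ring R] {x : α → R}

theorem isCubeVertex_one : IsCubeVertex (1 : α → R) := fun _ => .inl rfl

theorem IsCubeVertex.piecewise_neg (hx : IsCubeVertex x) (S : Finset α) :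
    IsCubeVertex (S.piecewise (-x) x) := by
  intro j
  by_cases hj : j ∈ S
  · simpa [hj, neg_eq_iff_eq_neg, or_comm] using hx j
  · simpa [hj] using hx j

theorem IsCubeVertex.mul_ne_zero (hx : IsCubeVertex x) (j : α) {r : R} (hr : r ≠ 0) :
    x j * r ≠ 0 := by
  rcases hx j with h | h <;> simpa [h]

theorem piecewise_neg_dotProduct [Fintype α] (x w : α → R) (S : Finset α) :
    S.piecewise (-x) x ⬝ᵥ w = x ⬝ᵥ w + ∑ j ∈ S, -2 * (x j * w j) := by
  have hterm (j : α) : S.piecewise (-x) x j * w j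
      = x j * w j + if j ∈ S then -2 * (x j * w j) else 0 := by
    by_cases hj : j ∈ S
    · rw [piecewise_eq_of_mem _ _ _ hj, if_pos hj, Pi.neg_apply]
      noncomm_ring
    · rw [piecewise_eq_of_notMem _ _ _ hj, if_neg hj, add_zero]
  simp only [dotProduct, hterm, sum_add_distrib, sum_ite_mem, univ_inter]

end Vertices

section PrivateVertex

variable {α ι R : Type*} [Fintype α] [CommRing R] [LinearOrder R] [IsStrictOrderedRing R]
  {w y : α → R} {m : R} {v : ι → α → R} {μ : ι → R} {J : Finset ι}

theorem card_support_le_two_mul_card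
    (hcov : ∀ x, IsCubeVertex x → x ⬝ᵥ w = m ∨ ∃ i ∈ J, x ⬝ᵥ v i = μ i)
    (hy : IsCubeVertex y) (hyw : y ⬝ᵥ w = m) (hyv : ∀ i ∈ J, y ⬝ᵥ v i ≠ μ i) :
    #{j | w j ≠ 0} ≤ 2 * #J := by
  obtain ⟨P, -, hcard, hP⟩ := exists_subset_card_le_two_mul_forall_sum_ne_zero
    (s := {j | w j ≠ 0}) (c := fun j => y j * w j)
    fun j hj => hy.mul_ne_zero j (mem_filter.mp hj).2
  suffices hPJ : #P ≤ #J by lia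
  refine card_le_card_of_cover_nonempty_subsets (a := fun i => y ⬝ᵥ v i - μ i)
    (b := fun i j => -2 * (y j * v i j)) (fun i hi => sub_ne_zero.mpr (hyv i hi))
    fun S hS hne => ?_
  rcases hcov _ (hy.piecewise_neg S) with h | ⟨i, hi, h⟩
  · rw [piecewise_neg_dotProduct, hyw, add_eq_left, ← mul_sum] at h
    exact absurd h (mul_ne_zero (by norm_num) (hP S hS hne))
  · rw [piecewise_neg_dotProduct] at h
    exact ⟨i, hi, by linear_combination h⟩

theorem exists_mem_apply_ne_zero
    (hcov : ∀ x, IsCubeVertex x → x ⬝ᵥ w = m ∨ ∃ i ∈ J, x ⬝ᵥ v i = μ i)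
    (hy : IsCubeVertex y) (hyw : y ⬝ᵥ w = m) (hyv : ∀ i ∈ J, y ⬝ᵥ v i ≠ μ i)
    {j : α} (hj : w j ≠ 0) : ∃ i ∈ J, v i j ≠ 0 := by
  by_contra! hvj
  rcases hcov _ (hy.piecewise_neg {j}) with h | ⟨i, hi, h⟩
  · rw [piecewise_neg_dotProduct, hyw, add_eq_left, sum_singleton] at h
    exact mul_ne_zero (by norm_num) (hy.mul_ne_zero j hj) h
  · rw [piecewise_neg_dotProduct, sum_singleton, hvj i hi, mul_zero, mul_zero, add_zero] at h
    exact hyv i hi h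

end PrivateVertex

section EssentialCover

variable {α ι R : Type*} [Fintype α] [Fintype ι] [CommRing R] [LinearOrder R]
  [IsStrictOrderedRing R] {v : ι → α → R} {μ : ι → R}

theorem card_le_card_mul_card_sub_one (hcov : ∀ x, IsCubeVertex x → ∃ i, x ⬝ᵥ v i = μ i)
    (hsupp : ∀ j, ∃ i, v i j ≠ 0)
    (hess : ∀ i, ∃ x, IsCubeVertex x ∧ x ⬝ᵥ v i = μ i ∧ ∀ i', i' ≠ i → x ⬝ᵥ v i' ≠ μ i') :
    Fintype.card α ≤ Fintype.card ι * (Fintype.card ι - 1) := by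
  have hcov' (i : ι) (x : α → R) (hx : IsCubeVertex x) :
      x ⬝ᵥ v i = μ i ∨ ∃ i' ∈ univ.erase i, x ⬝ᵥ v i' = μ i' := by
    obtain ⟨i', hi'⟩ := hcov x hx
    by_cases h : i' = i
    · exact .inl (h ▸ hi')
    · exact .inr ⟨i', by simpa using h, hi'⟩
  have hrow (i : ι) : #{j | v i j ≠ 0} ≤ 2 * (Fintype.card ι - 1) := by
    obtain ⟨y, hy, hyi, hyi'⟩ := hess i
    rw [← card_univ, ← card_erase_of_mem (mem_univ i)]
    exact card_support_le_two_mul_card (hcov' i) hy hyi fun i' h => hyi' i' (ne_of_mem_erase h)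
  have hcol (j : α) : 2 ≤ #{i | v i j ≠ 0} := by
    obtain ⟨i, hi⟩ := hsupp j
    obtain ⟨y, hy, hyi, hyi'⟩ := hess i
    obtain ⟨i', hmem, hi'⟩ := exists_mem_apply_ne_zero (hcov' i) hy hyi
      (fun i' h => hyi' i' (ne_of_mem_erase h)) hi
    exact one_lt_card.mpr ⟨i', by simpa using hi', i, by simpa using hi, ne_of_mem_erase hmem⟩
  have hcount : Fintype.card α * 2 ≤ Fintype.card ι * (2 * (Fintype.card ι - 1)) :=
    card_mul_le_card_mul (s := univ) (t := univ) (fun j i => v i j ≠ 0) (fun j _ => hcol j)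
      fun i _ => hrow i
  linarith

theorem essential_cover_sqrt_lower_bound_general
    (hcov : ∀ x, IsCubeVertex x → ∃ i, x ⬝ᵥ v i = μ i) (hsupp : ∀ j, ∃ i, v i j ≠ 0)
    (hess : ∀ i, ∃ x, IsCubeVertex x ∧ x ⬝ᵥ v i = μ i ∧ ∀ i', i' ≠ i → x ⬝ᵥ v i' ≠ μ i') :
    (√(4 * Fintype.card α + 1) + 1) / 2 ≤ (Fintype.card ι : ℝ) := by
  obtain ⟨i, -⟩ := hcov 1 isCubeVertex_one
  have hι : 1 ≤ Fintype.card ι := Fintype.card_pos_iff.mpr ⟨i⟩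
  have hcard : (Fintype.card α : ℝ) ≤ Fintype.card ι * (Fintype.card ι - 1) := by
    rw [← Nat.cast_pred hι]
    exact_mod_cast card_le_card_mul_card_sub_one hcov hsupp hess
  have hsqrt : √(4 * Fintype.card α + 1) ≤ 2 * Fintype.card ι - 1 := by
    have hι' : (1 : ℝ) ≤ Fintype.card ι := by exact_mod_cast hι
    exact Real.sqrt_le_iff.mpr ⟨by linarith, by linarith⟩
  linarith

end EssentialCover

/-- Every essential cover of the `n`-cube has at least `(√(4n+1)+1)/2` hyperplanes. -/
theorem essential_cover_sqrt_lower_bound (n k : ℕ) (hn : 1 ≤ n)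
    (v : Fin k → Fin n → ℝ) (μ : Fin k → ℝ) (h : IsEssentialCover n k v μ) :
    (Real.sqrt (4 * n + 1) + 1) / 2 ≤ (k : ℝ) := by
  obtain ⟨-, hcov, hsupp, hess⟩ := h
  simpa using essential_cover_sqrt_lower_bound_general hcov hsupp hess
end

section
/- For every v ∈ ℝ^n with ‖v‖_0 > 0 and every a ∈ ℝ, if x is drawn uniformly at random from {−1,1}^n then Pr[⟨x,v⟩ = a] ≤ 1/√(‖v‖_0). -/
open scoped Classical

/-!
Fix the coordinates on which the random summand is constant. On the remaining `k` coordinates,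
relabel the two outcomes so that each summand increases; the sum is then strictly monotone on the
cube, so its level sets are antichains, and Sperner's theorem bounds them by
`k.choose (k / 2) ≤ 2 ^ k / √k`.
-/

theorem centralBinom_sq_mul_two_mul_add_one_le (m : ℕ) :
    m.centralBinom ^ 2 * (2 * m + 1) ≤ 16 ^ m := by
  induction m with
  | zero => simp
  | succ m ih =>
    have recurrence : (m + 1) ^ 2 * (m + 1).centralBinom ^ 2 =
        4 * (2 * m + 1) ^ 2 * m.centralBinom ^ 2 := by
      rw [← mul_pow, m.succ_mul_centralBinom_succ]
      ring
    refine Nat.le_of_mul_le_mul_left ?_ (show 0 < (m + 1) ^ 2 by positivity)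
    calc (m + 1) ^ 2 * ((m + 1).centralBinom ^ 2 * (2 * (m + 1) + 1))
        = ((m + 1) ^ 2 * (m + 1).centralBinom ^ 2) * (2 * m + 3) := by ring
      _ = 4 * ((2 * m + 1) * (2 * m + 3)) * (m.centralBinom ^ 2 * (2 * m + 1)) := by
          rw [recurrence]
          ring
      _ ≤ 4 * (4 * (m + 1) ^ 2) * 16 ^ m := by
          have amgm : (2 * m + 1) * (2 * m + 3) ≤ 4 * (m + 1) ^ 2 := by nlinarith
          gcongr
      _ = (m + 1) ^ 2 * 16 ^ (m + 1) := by ring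

theorem centralBinom_succ_eq_two_mul_choose (m : ℕ) :
    (m + 1).centralBinom = 2 * (2 * m + 1).choose m := by
  rw [Nat.centralBinom_eq_two_mul_choose, show 2 * (m + 1) = (2 * m + 1) + 1 by ring,
    Nat.choose_succ_succ, Nat.choose_symm_half, two_mul ((2 * m + 1).choose m)]

theorem choose_half_sq_mul_self_le_four_pow (k : ℕ) : k.choose (k / 2) ^ 2 * k ≤ 4 ^ k := by
  rcases Nat.even_or_odd' k with ⟨m, rfl | rfl⟩
  · calc (2 * m).choose (2 * m / 2) ^ 2 * (2 * m)
        = m.centralBinom ^ 2 * (2 * m) := by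
          rw [Nat.mul_div_cancel_left m two_pos, Nat.centralBinom_eq_two_mul_choose]
      _ ≤ m.centralBinom ^ 2 * (2 * m + 1) := by gcongr; exact Nat.le_succ _
      _ ≤ 16 ^ m := centralBinom_sq_mul_two_mul_add_one_le m
      _ = 4 ^ (2 * m) := by rw [pow_mul]; norm_num
  · refine Nat.le_of_mul_le_mul_left ?_ (show 0 < 4 by norm_num)
    calc 4 * ((2 * m + 1).choose ((2 * m + 1) / 2) ^ 2 * (2 * m + 1))
        = (m + 1).centralBinom ^ 2 * (2 * m + 1) := by
          rw [show (2 * m + 1) / 2 = m by lia, centralBinom_succ_eq_two_mul_choose]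
          ring
      _ ≤ (m + 1).centralBinom ^ 2 * (2 * (m + 1) + 1) := by gcongr; lia
      _ ≤ 16 ^ (m + 1) := centralBinom_sq_mul_two_mul_add_one_le (m + 1)
      _ = 4 * 4 ^ (2 * m + 1) := by
          rw [← pow_succ', show 2 * m + 1 + 1 = 2 * (m + 1) by ring, pow_mul]
          norm_num

theorem choose_half_mul_sqrt_le_two_pow (k : ℕ) : (k.choose (k / 2) : ℝ) * √k ≤ 2 ^ k := by
  refine le_of_sq_le_sq ?_ (by positivity)
  calc ((k.choose (k / 2) : ℝ) * √k) ^ 2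
      = (k.choose (k / 2) : ℝ) ^ 2 * k := by rw [mul_pow, Real.sq_sqrt k.cast_nonneg]
    _ ≤ 4 ^ k := mod_cast choose_half_sq_mul_self_le_four_pow k
    _ = (2 ^ k) ^ 2 := by rw [← pow_mul, mul_comm, pow_mul]; norm_num

section BooleanCube

open Finset

variable {ι M : Type*} [Fintype ι]

theorem exists_perm_strictMono_comp_of_ne [LinearOrder M] {f : Bool → M} (hf : f true ≠ f false) :
    ∃ σ : Equiv.Perm Bool, StrictMono (f ∘ σ) := by
  rcases hf.lt_or_gt with h | h
  · exact ⟨Equiv.boolNot, by simpa [StrictMono, Bool.forall_bool] using h⟩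
  · exact ⟨Equiv.refl Bool, by simpa [StrictMono, Bool.forall_bool] using h⟩

theorem strictMono_sum_apply [AddCommMonoid M] [PartialOrder M] [IsOrderedCancelAddMonoid M]
    {α : ι → Type*} [∀ j, PartialOrder (α j)] {f : ∀ j, α j → M}
    (hf : ∀ j, StrictMono (f j)) :
    StrictMono fun x : ∀ j, α j => ∑ j, f j (x j) := by
  intro x y hxy
  obtain ⟨hle, j, hlt⟩ := Pi.lt_def.1 hxy
  exact sum_lt_sum (fun i _ => (hf i).monotone (hle i)) ⟨j, mem_univ j, hf j hlt⟩

variable [DecidableEq ι]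

theorem card_fiber_le_choose_half_of_strictMono [Preorder M] [DecidableEq M]
    {F : (ι → Bool) → M} (hF : StrictMono F) (a : M) :
    #{x | F x = a} ≤ (Fintype.card ι).choose (Fintype.card ι / 2) := by
  let trueSet (x : ι → Bool) : Finset ι := {j | x j}
  have le_of_trueSet_subset ⦃x y : ι → Bool⦄ (h : trueSet x ⊆ trueSet y) : x ≤ y :=
    fun j hj => by simpa [trueSet] using @h j (by simpa [trueSet] using hj)
  have trueSet_injective : Function.Injective trueSet := fun x y h =>
    le_antisymm (le_of_trueSet_subset h.subset) (le_of_trueSet_subset h.superset)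
  have antichain_fiber : IsAntichain (· ≤ ·) {x | F x = a} := fun x hx y hy hne hle =>
    (hF (hle.lt_of_ne hne)).ne (hx.trans hy.symm)
  rw [← card_image_of_injective _ trueSet_injective]
  apply IsAntichain.sperner
  simpa using antichain_fiber.image trueSet le_of_trueSet_subset

theorem card_sum_eq_le_choose_half_of_ne [AddCommMonoid M] [LinearOrder M]
    [IsOrderedCancelAddMonoid M] {f : ι → Bool → M} (hf : ∀ j, f j true ≠ f j false) (a : M) :
    #{x : ι → Bool | ∑ j, f j (x j) = a} ≤
      (Fintype.card ι).choose (Fintype.card ι / 2) := by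
  choose σ hσ using fun j => exists_perm_strictMono_comp_of_ne (hf j)
  calc #{x : ι → Bool | ∑ j, f j (x j) = a}
      = #{x : ι → Bool | ∑ j, (f j ∘ σ j) (x j) = a} :=
        (card_equiv (Equiv.piCongrRight σ) (by simp)).symm
    _ ≤ _ := card_fiber_le_choose_half_of_strictMono (strictMono_sum_apply hσ) a

theorem card_sum_eq_le_two_pow_mul_choose_half [AddCommGroup M] [LinearOrder M]
    [IsOrderedAddMonoid M] (f : ι → Bool → M) (a : M) :
    #{x : ι → Bool | ∑ j, f j (x j) = a} ≤
      2 ^ #{j | f j true = f j false} *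
        (#{j | f j true ≠ f j false}).choose (#{j | f j true ≠ f j false} / 2) := by
  let IsConst (j : ι) : Prop := f j true = f j false
  let c : M := ∑ j : {j // IsConst j}, f j true
  have sum_split (x : ι → Bool) :
      ∑ j, f j (x j) = c + ∑ j : {j // ¬ IsConst j}, f j (x j) := by
    rw [← Fintype.sum_subtype_add_sum_subtype IsConst]
    congr! 2 with j
    cases x j
    exacts [j.2.symm, rfl]
  calc #{x : ι → Bool | ∑ j, f j (x j) = a}
      = #((univ : Finset ({j // IsConst j} → Bool)) ×ˢ
          ({y | ∑ j : {j // ¬ IsConst j}, f j (y j) = a - c} :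
            Finset ({j // ¬ IsConst j} → Bool))) :=
        card_equiv (Equiv.piEquivPiSubtypeProd IsConst fun _ => Bool)
          (by simp [sum_split, eq_sub_iff_add_eq'])
    _ = 2 ^ #{j | IsConst j} *
          #{y : {j // ¬ IsConst j} → Bool | ∑ j : {j // ¬ IsConst j}, f j (y j) = a - c} := by
        simp [card_product, Fintype.card_subtype]
    _ ≤ 2 ^ #{j | IsConst j} * (#{j | ¬ IsConst j}).choose (#{j | ¬ IsConst j} / 2) := by
        gcongr
        simpa only [Fintype.card_subtype] using
          card_sum_eq_le_choose_half_of_ne (fun j : {j // ¬ IsConst j} => j.2) (a - c)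

theorem littlewood_offord_general [AddCommGroup M] [LinearOrder M] [IsOrderedAddMonoid M]
    (f : ι → Bool → M) (hf : 0 < #{j | f j true ≠ f j false}) (a : M) :
    (#{x : ι → Bool | ∑ j, f j (x j) = a} : ℝ) / 2 ^ Fintype.card ι ≤
      1 / √(#{j | f j true ≠ f j false}) := by
  have count := card_sum_eq_le_two_pow_mul_choose_half f a
  have card_add_card : #{j | f j true = f j false} + #{j | f j true ≠ f j false} =
      Fintype.card ι := card_filter_add_card_filter_not _
  set l := #{j | f j true = f j false}
  set k := #{j | f j true ≠ f j false}
  rw [div_le_div_iff₀ (by positivity) (by positivity), one_mul]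
  calc (#{x : ι → Bool | ∑ j, f j (x j) = a} : ℝ) * √k
      ≤ (2 ^ l * k.choose (k / 2)) * √k := by gcongr; exact_mod_cast count
    _ = 2 ^ l * (k.choose (k / 2) * √k) := by ring
    _ ≤ 2 ^ l * 2 ^ k := by gcongr; exact choose_half_mul_sqrt_le_two_pow k
    _ = 2 ^ Fintype.card ι := by rw [← pow_add, card_add_card]

end BooleanCube

/-- The Littlewood–Offord anti-concentration bound: for a uniformly random sign vector `x`,
the probability that `⟨x, v⟩ = a` is at most `1/√(‖v‖₀)`. -/
theorem littlewood_offord (n : ℕ) (v : Fin n → ℝ)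
    (hv : 0 < (Finset.univ.filter fun j => v j ≠ 0).card) (a : ℝ) :
    ((Finset.univ.filter fun ε : Fin n → Bool =>
        ∑ j, (if ε j then (1 : ℝ) else -1) * v j = a).card : ℝ) / 2 ^ n
      ≤ 1 / Real.sqrt ((Finset.univ.filter fun j => v j ≠ 0).card) := by
  simpa [self_eq_neg] using littlewood_offord_general
    (fun j b => (if b then (1 : ℝ) else -1) * v j) (by simpa [self_eq_neg] using hv) a
end

section
/- Let M be a k × k real symmetric matrix with all diagonal entries equal to 1, let γ_1,…,γ_k ∈ ℝ and let θ ≥ 0. Then there exists a sign vector ε ∈ {−1,1}^k such that for every i ∈ [k], |θ (Mε)_i − γ_i| ≥ θ. -/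
/-!
Choose `ε` maximizing `εᵀMε - 2 ⟨ε, γ⟩` over the finitely many sign vectors. Since `M` is
symmetric, flipping the sign of `ε i` changes this value by `4 (M i i - ε i ((Mε) i - γ i))`.
Maximality makes the change nonpositive, so `M i i ≤ ε i ((Mε) i - γ i) ≤ |(Mε) i - γ i|`. Bang's
lemma is this bound for the matrix `θ M`, whose diagonal entries are all `θ`.
-/

open Matrix

section SignVectors

/-- The vertices of the cube `[-1, 1]^ι`, over which Bang's quadratic function is maximized. They
are encoded as vectors over `R`, so that matrices act on them without coercions. -/
def signVectors (ι R : Type*) [One R] [Neg R] : Set (ι → R) :=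
  {ε | ∀ i, ε i = 1 ∨ ε i = -1}

theorem finite_signVectors (ι R : Type*) [Finite ι] [One R] [Neg R] :
    (signVectors ι R).Finite :=
  Set.Finite.pi' fun _ => Set.toFinite {1, -1}

theorem signVectors_nonempty (ι R : Type*) [One R] [Neg R] : (signVectors ι R).Nonempty :=
  ⟨1, fun _ => Or.inl rfl⟩

theorem update_neg_mem_signVectors {ι R : Type*} [DecidableEq ι] [One R] [InvolutiveNeg R]
    {ε : ι → R} (hε : ε ∈ signVectors ι R) (i : ι) :
    Function.update ε i (-ε i) ∈ signVectors ι R := by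
  intro j
  obtain rfl | hji := eq_or_ne j i
  · simpa only [Function.update_self, neg_eq_iff_eq_neg, neg_neg] using (hε j).symm
  · simpa only [Function.update_of_ne hji] using hε j

end SignVectors

section BangFunction

variable {ι R : Type*} [Fintype ι]

theorem dotProduct_mulVec_add_single [DecidableEq ι] [CommSemiring R] {M : Matrix ι ι R}
    (hM : M.IsSymm) (x : ι → R) (i : ι) (c : R) :
    (x + Pi.single i c) ⬝ᵥ M *ᵥ (x + Pi.single i c) =
      x ⬝ᵥ M *ᵥ x + 2 * c * (M *ᵥ x) i + c ^ 2 * M i i := by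
  have cross : x ⬝ᵥ M *ᵥ Pi.single i c = c * (M *ᵥ x) i := by
    rw [dotProduct_mulVec, ← mulVec_transpose, hM.eq, dotProduct_single, mul_comm]
  have diagonal : (M *ᵥ Pi.single i c) i = M i i * c := dotProduct_single ..
  rw [mulVec_add, add_dotProduct, dotProduct_add, dotProduct_add, single_dotProduct,
    single_dotProduct, cross, diagonal]
  ring

/-- The quadratic function `xᵀMx - 2 ⟨x, γ⟩` that Bang's argument maximizes over sign vectors. -/
def bangFunction [CommRing R] (M : Matrix ι ι R) (γ x : ι → R) : R :=
  x ⬝ᵥ M *ᵥ x - 2 * (x ⬝ᵥ γ)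

theorem bangFunction_update_neg [DecidableEq ι] [CommRing R] {M : Matrix ι ι R} (hM : M.IsSymm)
    (γ x : ι → R) (i : ι) :
    bangFunction M γ (Function.update x i (-x i)) =
      bangFunction M γ x + 4 * (x i ^ 2 * M i i - x i * ((M *ᵥ x) i - γ i)) := by
  have flip : Function.update x i (-x i) = x + Pi.single i (-2 * x i) := by
    ext j
    obtain rfl | hji := eq_or_ne j i
    · simp only [Function.update_self, Pi.add_apply, Pi.single_eq_same]
      ring
    · simp only [Function.update_of_ne hji, Pi.add_apply, Pi.single_eq_of_ne hji, add_zero]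
  rw [flip, bangFunction, bangFunction, dotProduct_mulVec_add_single hM, add_dotProduct,
    single_dotProduct]
  ring

variable [CommRing R] [LinearOrder R] [IsStrictOrderedRing R] {M : Matrix ι ι R}

theorem diag_le_of_isMaxOn_bangFunction (hM : M.IsSymm) {γ ε : ι → R}
    (hε : ε ∈ signVectors ι R) (hmax : IsMaxOn (bangFunction M γ) (signVectors ι R) ε)
    (i : ι) :
    M i i ≤ ε i * ((M *ᵥ ε) i - γ i) := by
  classical
  have sq_eq_one : ε i ^ 2 = 1 := sq_eq_one_iff.mpr (hε i)
  have flip_le := isMaxOn_iff.mp hmax _ (update_neg_mem_signVectors hε i)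
  rw [bangFunction_update_neg hM, sq_eq_one] at flip_le
  linarith

theorem bang_lemma_general (hM : M.IsSymm) (γ : ι → R) :
    ∃ ε : ι → R, (∀ i, ε i = 1 ∨ ε i = -1) ∧ ∀ i, M i i ≤ |(M *ᵥ ε) i - γ i| := by
  obtain ⟨ε, hε, hmax⟩ := Set.exists_max_image _ (bangFunction M γ) (finite_signVectors ι R)
    (signVectors_nonempty ι R)
  refine ⟨ε, hε, fun i => ?_⟩
  calc
    M i i ≤ ε i * ((M *ᵥ ε) i - γ i) := diag_le_of_isMaxOn_bangFunction hM hε hmax i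
    _ ≤ |ε i * ((M *ᵥ ε) i - γ i)| := le_abs_self _
    _ = |(M *ᵥ ε) i - γ i| := by rw [abs_mul, (abs_eq zero_le_one).mpr (hε i), one_mul]

end BangFunction

/-- Bang's lemma (isolated by Ball): for a symmetric `k × k` matrix `M` with unit diagonal,
reals `γ₁, …, γ_k` and `θ ≥ 0`, there is a sign vector `ε` with
`|θ (Mε)_i − γ_i| ≥ θ` for all `i`. -/
theorem bang_lemma (k : ℕ) (M : Matrix (Fin k) (Fin k) ℝ) (hsym : M.IsSymm)
    (hdiag : ∀ i, M i i = 1) (γ : Fin k → ℝ) (θ : ℝ) (hθ : 0 ≤ θ) :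
    ∃ ε : Fin k → ℝ, (∀ i, ε i = 1 ∨ ε i = -1) ∧
      ∀ i, θ ≤ |θ * M.mulVec ε i - γ i| := by
  simpa [smul_mulVec, hdiag] using bang_lemma_general (hsym.smul θ) γ
end

section
/- Let v_1,…,v_m ∈ ℝ^n and let z ∈ ℝ^n satisfy ‖z‖_∞ ≤ 1. Then there exists w ∈ ℝ^n such that: (1) ⟨w, v_i⟩ = ⟨z, v_i⟩ for every i ∈ [m]; (2) ‖w‖_∞ ≤ 1; and (3) the number of coordinates j with w_j ∉ {−1,1} is at most m. -/
open scoped Classical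

/-! The points `w` of the box `[a, b]` with `L w = L z` form a nonempty compact set, which therefore
has an extreme point. At an extreme point `w`, the kernel of `L` contains no nonzero vector `u`
supported on the coordinates with `a j < w j < b j`, since otherwise `w` would be the midpoint of
`w + ε u` and `w - ε u` for a small `ε > 0`. Thus `L` is injective on the vectors supported on these
coordinates, and there are at most `rank L` of them. -/

theorem card_le_finrank_range_of_forall_supported_eq_zero {K F ι : Type*} [Ring K]
    [StrongRankCondition K] [AddCommGroup F] [Module K F] [Finite ι]
    (L : (ι → K) →ₗ[K] F) (s : Finset ι)
    (h : ∀ u, L u = 0 → (∀ j ∉ s, u j = 0) → u = 0) :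
    s.card ≤ Module.finrank K (LinearMap.range L) := by
  let extendByZero : (s → K) →ₗ[K] ι → K := Function.ExtendByZero.linearMap K Subtype.val
  have extendByZero_injective : Function.Injective extendByZero :=
    Function.extend_injective Subtype.val_injective (0 : ι → K)
  have comp_injective : Function.Injective (L.rangeRestrict ∘ₗ extendByZero) := by
    refine (injective_iff_map_eq_zero _).2 fun g hg => extendByZero_injective ?_
    rw [map_zero]
    exact h _ (congrArg Subtype.val hg) fun j hj =>
      Function.extend_apply' g (0 : ι → K) j fun ⟨i, hi⟩ => hj (hi ▸ i.2)
  simpa using LinearMap.finrank_le_finrank_of_injective comp_injective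

section OrderedField

variable {𝕜 ι E F : Type*} [Field 𝕜] [LinearOrder 𝕜] [IsStrictOrderedRing 𝕜]
  [AddCommGroup E] [Module 𝕜 E] [AddCommGroup F] [Module 𝕜 F]

theorem eq_zero_of_mem_extremePoints_of_add_mem_of_sub_mem {A : Set E} {x u : E}
    (hx : x ∈ A.extremePoints 𝕜) (hadd : x + u ∈ A) (hsub : x - u ∈ A) : u = 0 := by
  let _ : Invertible (2 : 𝕜) := invertibleOfNonzero two_ne_zero
  simpa using hx.2 hadd hsub (mem_openSegment_add_sub x u)

theorem eventually_add_smul_mem_Icc [TopologicalSpace 𝕜] [OrderTopology 𝕜] [Finite ι]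
    {a b w u : ι → 𝕜} (hw : w ∈ Set.Icc a b)
    (hu : ∀ j, u j ≠ 0 → w j ∈ Set.Ioo (a j) (b j)) :
    ∀ᶠ t in nhds (0 : 𝕜), w + t • u ∈ Set.Icc a b := by
  have coordinatewise : ∀ᶠ t in nhds (0 : 𝕜), ∀ j, w j + t * u j ∈ Set.Icc (a j) (b j) := by
    refine Filter.eventually_all.2 fun j => ?_
    by_cases huj : u j = 0
    · simpa [huj] using ⟨hw.1 j, hw.2 j⟩
    · have hcont : Continuous fun t : 𝕜 => w j + t * u j := by fun_prop
      exact hcont.continuousAt.eventually_mem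
        (Icc_mem_nhds (by simpa using (hu j huj).1) (by simpa using (hu j huj).2))
  exact coordinatewise.mono fun t ht => ⟨fun j => (ht j).1, fun j => (ht j).2⟩

theorem exists_pos_add_smul_mem_Icc_sub_smul_mem_Icc [Finite ι] {a b w u : ι → 𝕜}
    (hw : w ∈ Set.Icc a b) (hu : ∀ j, u j ≠ 0 → w j ∈ Set.Ioo (a j) (b j)) :
    ∃ ε : 𝕜, 0 < ε ∧ w + ε • u ∈ Set.Icc a b ∧ w - ε • u ∈ Set.Icc a b := by
  let _ := Preorder.topology 𝕜
  have : OrderTopology 𝕜 := ⟨rfl⟩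
  have hadd := eventually_add_smul_mem_Icc hw hu
  have hsub := eventually_add_smul_mem_Icc (u := -u) hw fun j hj => hu j (neg_ne_zero.1 hj)
  obtain ⟨ε, ⟨hadd, hsub⟩, hε⟩ :=
    (((hadd.and hsub).filter_mono nhdsWithin_le_nhds).and
      (self_mem_nhdsWithin (s := Set.Ioi 0))).exists
  exact ⟨ε, hε, hadd, by simpa [sub_eq_add_neg] using hsub⟩

theorem eq_zero_of_mem_extremePoints_Icc_inter_preimage [Finite ι] {L : (ι → 𝕜) →ₗ[𝕜] F}
    {a b w u : ι → 𝕜} {c : F} (hw : w ∈ (Set.Icc a b ∩ L ⁻¹' {c}).extremePoints 𝕜)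
    (hLu : L u = 0) (hu : ∀ j, u j ≠ 0 → w j ∈ Set.Ioo (a j) (b j)) : u = 0 := by
  obtain ⟨hwab, hLw : L w = c⟩ := hw.1
  obtain ⟨ε, hε, hadd, hsub⟩ := exists_pos_add_smul_mem_Icc_sub_smul_mem_Icc hwab hu
  have hεu : ε • u = 0 :=
    eq_zero_of_mem_extremePoints_of_add_mem_of_sub_mem hw
      ⟨hadd, by simp [hLu, hLw]⟩ ⟨hsub, by simp [hLu, hLw]⟩
  exact (smul_eq_zero_iff_right hε.ne').1 hεu

theorem card_ne_endpoints_le_finrank_range_of_mem_extremePoints [Fintype ι]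
    {L : (ι → 𝕜) →ₗ[𝕜] F} {a b w : ι → 𝕜} {c : F}
    (hw : w ∈ (Set.Icc a b ∩ L ⁻¹' {c}).extremePoints 𝕜) :
    (Finset.univ.filter fun j => w j ≠ b j ∧ w j ≠ a j).card ≤
      Module.finrank 𝕜 (LinearMap.range L) := by
  obtain ⟨hlower, hupper⟩ : w ∈ Set.Icc a b := hw.1.1
  refine card_le_finrank_range_of_forall_supported_eq_zero L _ fun u hLu hu =>
    eq_zero_of_mem_extremePoints_Icc_inter_preimage hw hLu fun j huj => ?_
  have hj : w j ≠ b j ∧ w j ≠ a j := by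
    by_contra hj
    exact huj (hu j (by simpa using hj))
  exact ⟨(hlower j).lt_of_ne' hj.2, (hupper j).lt_of_ne hj.1⟩

end OrderedField

theorem rounding_step_general {ι F : Type*} [Fintype ι] [AddCommGroup F] [Module ℝ F]
    (L : (ι → ℝ) →ₗ[ℝ] F) {a b z : ι → ℝ} (hz : z ∈ Set.Icc a b) :
    ∃ w ∈ Set.Icc a b, L w = L z ∧
      (Finset.univ.filter fun j => w j ≠ b j ∧ w j ≠ a j).card ≤
        Module.finrank ℝ (LinearMap.range L) := by
  have isClosed_fiber : IsClosed (L ⁻¹' {L z}) := by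
    have fiber_eq : L ⁻¹' {L z} = (· - z) ⁻¹' (LinearMap.ker L : Set (ι → ℝ)) := by
      ext w
      simp [sub_eq_zero]
    rw [fiber_eq]
    exact (LinearMap.ker L).closed_of_finiteDimensional.preimage (by fun_prop)
  obtain ⟨w, hw⟩ := (isCompact_Icc.inter_right isClosed_fiber).extremePoints_nonempty ⟨z, hz, rfl⟩
  exact ⟨w, hw.1.1, hw.1.2, card_ne_endpoints_le_finrank_range_of_mem_extremePoints hw⟩

/-- Linear-algebraic rounding: given `v₁, …, v_m ∈ ℝⁿ` and `z` with `‖z‖_∞ ≤ 1`, there is a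
`w` with the same inner products with each `v_i`, `‖w‖_∞ ≤ 1`, and at most `m` coordinates of
`w` not in `{−1, 1}`. -/
theorem rounding_step (n m : ℕ) (v : Fin m → Fin n → ℝ) (z : Fin n → ℝ)
    (hz : ∀ j, |z j| ≤ 1) :
    ∃ w : Fin n → ℝ,
      (∀ i, ∑ j, w j * v i j = ∑ j, z j * v i j) ∧
      (∀ j, |w j| ≤ 1) ∧
      (Finset.univ.filter fun j => w j ≠ 1 ∧ w j ≠ -1).card ≤ m := by
  obtain ⟨w, hw, hwz, hcard⟩ := rounding_step_general (Matrix.of v).mulVecLin (a := -1) (b := 1)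
    ⟨fun j => (abs_le.1 (hz j)).1, fun j => (abs_le.1 (hz j)).2⟩
  refine ⟨w, fun i => ?_, fun j => abs_le.2 ⟨hw.1 j, hw.2 j⟩,
    hcard.trans (Matrix.rank_le_height _)⟩
  simpa [Matrix.mulVecLin_apply, Matrix.mulVec, dotProduct, mul_comm] using congrFun hwz i
end

section
/- There is a constant C > 0 such that the following holds. Let P be a product probability distribution on {−1,1}^n and let σ² > 0 be the variance of Σ_j z_j for z ∼ P. Then for every vector v ∈ ℝ^n all of whose n coordinates are nonzero and every γ ∈ ℝ, Pr_{z∼P}[⟨v,z⟩ = γ] ≤ C/σ. -/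
open scoped Classical

/-- The probability of the point of `{−1,1}^n` encoded by `x : Fin n → Bool` under the
product distribution whose `j`-th coordinate equals `1` with probability `p j` and `−1`
with probability `1 - p j`. -/
noncomputable def cubeWeight (n : ℕ) (p : Fin n → ℝ) (x : Fin n → Bool) : ℝ :=
  ∏ j, if x j then p j else 1 - p j

/-- The `±1` vector encoded by `x : Fin n → Bool`. -/
def signVec (n : ℕ) (x : Fin n → Bool) : Fin n → ℝ :=
  fun j => if x j then 1 else -1

/-!
Write `⟨v, z⟩ = Σ v_j z_j` and `w_j = p_j (1 - p_j)`, so that `Var (Σ z_j) = 4 Σ w_j`. The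
probability of the atom `⟨v, z⟩ = γ` is the mean over `t ∈ [0, ∞)` of `E cos ((⟨v, z⟩ - γ) t)`,
because the mean of `cos (a t)` is `1` if `a = 0` and `0` otherwise. The modulus of the
characteristic function of `⟨v, z⟩` bounds this expectation by
`∏ exp (-2 w_j sin² (v_j t)) = exp (-Σ 2 w_j sin² (v_j t))`, which by Jensen's inequality is at most
a convex combination of the functions `exp (-W sin² (v_j t))`, where `W = Σ 2 w_j`. Up to rescaling
time these are all the same `π`-periodic function, so that they have the same mean, whatever the
`v_j ≠ 0` are, and a Gaussian integral bounds this mean by `√(π / (4 W))`.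
-/

open Real MeasureTheory Filter Topology

/-- The one-sided Bohr mean: `m` is the limit of the averages of `f` over `[0, T]` as `T → ∞`.
Local integrability is included so that the averages are not junk values. -/
structure HasBohrMean (f : ℝ → ℝ) (m : ℝ) : Prop where
  intervalIntegrable (T : ℝ) : IntervalIntegrable f volume 0 T
  tendsto : Tendsto (fun T => T⁻¹ * ∫ t in 0..T, f t) atTop (𝓝 m)

namespace HasBohrMean

variable {f g : ℝ → ℝ} {m m' : ℝ}

lemma const (c : ℝ) : HasBohrMean (fun _ => c) c where
  intervalIntegrable _ := intervalIntegrable_const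
  tendsto := by
    refine tendsto_const_nhds.congr' ?_
    filter_upwards [eventually_ne_atTop 0] with T hT
    simp [hT]

lemma const_mul (hf : HasBohrMean f m) (c : ℝ) : HasBohrMean (fun t => c * f t) (c * m) where
  intervalIntegrable T := (hf.intervalIntegrable T).const_mul c
  tendsto := by
    simpa only [intervalIntegral.integral_const_mul, mul_left_comm] using hf.tendsto.const_mul c

lemma sum {ι : Type*} {s : Finset ι} {f : ι → ℝ → ℝ} {m : ι → ℝ}
    (hf : ∀ i ∈ s, HasBohrMean (f i) (m i)) :
    HasBohrMean (fun t => ∑ i ∈ s, f i t) (∑ i ∈ s, m i) where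
  intervalIntegrable T := by
    simpa only [Finset.sum_fn] using
      IntervalIntegrable.sum s fun i hi => (hf i hi).intervalIntegrable T
  tendsto := by
    refine (tendsto_finsetSum s fun i hi => (hf i hi).tendsto).congr fun T => ?_
    rw [intervalIntegral.integral_finsetSum fun i hi => (hf i hi).intervalIntegrable T,
      Finset.mul_sum]

lemma mono (hf : HasBohrMean f m) (hg : HasBohrMean g m') (hfg : ∀ t, f t ≤ g t) : m ≤ m' := by
  refine le_of_tendsto_of_tendsto hf.tendsto hg.tendsto ?_
  filter_upwards [eventually_ge_atTop 0] with T hT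
  gcongr
  exact intervalIntegral.integral_mono hT (hf.intervalIntegrable T) (hg.intervalIntegrable T) hfg

lemma comp_mul_left (hf : HasBohrMean f m) {a : ℝ} (ha : 0 < a) :
    HasBohrMean (fun t => f (a * t)) m where
  intervalIntegrable T := by
    simpa [ha.ne'] using (hf.intervalIntegrable (a * T)).comp_mul_left (c := a)
  tendsto := by
    refine (hf.tendsto.comp (tendsto_id.const_mul_atTop ha)).congr fun T => ?_
    simp [intervalIntegral.integral_comp_mul_left f ha.ne', mul_left_comm, mul_assoc]

lemma comp_mul_left_of_even (hf : HasBohrMean f m) (heven : f.Even) {a : ℝ} (ha : a ≠ 0) :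
    HasBohrMean (fun t => f (a * t)) m := by
  rcases ha.lt_or_gt with h | h
  · simpa [heven _] using hf.comp_mul_left (neg_pos.2 h)
  · exact hf.comp_mul_left h

lemma of_periodic {c : ℝ} (hf : f.Periodic c) (hc : 0 < c)
    (hint : IntervalIntegrable f volume 0 c) :
    HasBohrMean f (c⁻¹ * ∫ t in 0..c, f t) where
  intervalIntegrable T := hf.intervalIntegrable₀ hc.ne' hint 0 T
  tendsto := by
    have hfloor : Tendsto (fun T : ℝ => T⁻¹ * (⌊T / c⌋ : ℝ)) atTop (𝓝 c⁻¹) := by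
      refine (tendsto_nat_floor_mul_div_atTop (inv_nonneg.2 hc.le)).congr' ?_
      filter_upwards [eventually_ge_atTop 0] with T hT
      rw [← natCast_floor_eq_intCast_floor (by positivity : 0 ≤ T / c), div_eq_inv_mul T c,
        div_eq_inv_mul]
    have hperiods (b : ℝ) : Tendsto
        (fun T => T⁻¹ * (b + ⌊T / c⌋ • ∫ t in 0..c, f t)) atTop (𝓝 (c⁻¹ * ∫ t in 0..c, f t)) := by
      simpa [mul_add, mul_assoc] using
        (tendsto_inv_atTop_zero.mul_const b).add (hfloor.mul_const (∫ t in 0..c, f t))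
    set F := (fun t => ∫ s in 0..t, f s) '' Set.Icc 0 c
    refine tendsto_of_tendsto_of_tendsto_of_le_of_le' (hperiods (sInf F)) (hperiods (sSup F)) ?_ ?_
    · filter_upwards [eventually_ge_atTop 0] with T hT
      gcongr
      exact hf.sInf_add_zsmul_le_integral_of_pos hint hc T
    · filter_upwards [eventually_ge_atTop 0] with T hT
      gcongr
      exact hf.integral_le_sSup_add_zsmul_of_pos hint hc T

lemma cos_mul (a : ℝ) : HasBohrMean (fun t => cos (a * t)) (if a = 0 then 1 else 0) := by
  split_ifs with ha
  · simpa [ha] using const 1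
  · have hcos : HasBohrMean cos 0 := by
      simpa using of_periodic cos_periodic two_pi_pos (continuous_cos.intervalIntegrable _ _)
    exact hcos.comp_mul_left_of_even cos_neg ha

lemma sum_mul_cos {α : Type*} [Fintype α] (w X : α → ℝ) (γ : ℝ) :
    HasBohrMean (fun t => ∑ x, w x * cos ((X x - γ) * t)) (∑ x with X x = γ, w x) := by
  simpa [Finset.sum_filter, sub_eq_zero] using
    sum fun x (_ : x ∈ Finset.univ) => (cos_mul (X x - γ)).const_mul (w x)

end HasBohrMean

lemma periodic_exp_neg_mul_sin_sq (c : ℝ) :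
    Function.Periodic (fun s => exp (-(c * sin s ^ 2))) π := fun s => by
  simp [sin_add_pi]

-- On the period `[-π/2, π/2]`, `|sin s| ≥ 2 |s| / π` compares the integrand with a Gaussian.
lemma integral_exp_neg_mul_sin_sq_le {c : ℝ} (hc : 0 < c) :
    ∫ s in 0..π, exp (-(c * sin s ^ 2)) ≤ π * √(π / (4 * c)) := by
  have hpi := pi_pos
  set b := c * (2 / π) ^ 2 with hb
  have hbpos : 0 < b := by positivity
  have hgauss : ∀ s ∈ Set.Icc (-(π / 2)) (π / 2),
      exp (-(c * sin s ^ 2)) ≤ exp (-b * s ^ 2) := by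
    intro s hs
    have hsin : (2 / π * |s|) ^ 2 ≤ |sin s| ^ 2 := by
      gcongr
      exact mul_abs_le_abs_sin (abs_le.2 hs)
    rw [mul_pow, sq_abs, sq_abs] at hsin
    rw [hb, neg_mul, mul_assoc]
    gcongr
  calc ∫ s in 0..π, exp (-(c * sin s ^ 2))
      = ∫ s in (-(π / 2))..(π / 2), exp (-(c * sin s ^ 2)) := by
        have := (periodic_exp_neg_mul_sin_sq c).intervalIntegral_add_eq 0 (-(π / 2))
        rwa [zero_add, show -(π / 2) + π = π / 2 by ring] at this
    _ ≤ ∫ s in (-(π / 2))..(π / 2), exp (-b * s ^ 2) :=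
        intervalIntegral.integral_mono_on (by linarith)
          (Continuous.intervalIntegrable (by fun_prop) _ _)
          (Continuous.intervalIntegrable (by fun_prop) _ _) hgauss
    _ ≤ ∫ s, exp (-b * s ^ 2) := by
        rw [intervalIntegral.integral_of_le (by linarith)]
        exact setIntegral_le_integral (integrable_exp_neg_mul_sq hbpos)
          (.of_forall fun s => (exp_pos _).le)
    _ = √(π ^ 2 * (π / (4 * c))) := by
        rw [integral_gaussian, hb]
        congr 1
        field_simp
        ring
    _ = π * √(π / (4 * c)) := by
        rw [sqrt_mul (by positivity), sqrt_sq hpi.le]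

lemma exists_hasBohrMean_exp_neg_mul_sin_sq_le {c : ℝ} (hc : 0 < c) :
    ∃ m ≤ √(π / (4 * c)), ∀ a : ℝ, a ≠ 0 →
      HasBohrMean (fun t => exp (-(c * sin (a * t) ^ 2))) m := by
  refine ⟨π⁻¹ * ∫ s in 0..π, exp (-(c * sin s ^ 2)), ?_, fun a ha => ?_⟩
  · rw [inv_mul_le_iff₀ pi_pos]
    exact integral_exp_neg_mul_sin_sq_le hc
  · have hmean := HasBohrMean.of_periodic (periodic_exp_neg_mul_sin_sq c) pi_pos
      (Continuous.intervalIntegrable (by fun_prop) _ _)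
    exact hmean.comp_mul_left_of_even (fun s => by simp) ha

lemma exp_neg_sum_mul_le {ι : Type*} {s : Finset ι} {w : ι → ℝ} (hw : ∀ i ∈ s, 0 ≤ w i)
    (hpos : 0 < ∑ i ∈ s, w i) (y : ι → ℝ) :
    exp (-∑ i ∈ s, w i * y i) ≤
      ∑ i ∈ s, w i / (∑ k ∈ s, w k) * exp (-((∑ k ∈ s, w k) * y i)) := by
  set W := ∑ k ∈ s, w k
  have hJensen := convexOn_exp.map_sum_le (w := fun i => w i / W) (p := fun i => -(W * y i))
    (fun i hi => div_nonneg (hw i hi) hpos.le) (by rw [← Finset.sum_div, div_self hpos.ne'])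
    (fun _ _ => Set.mem_univ _)
  convert! hJensen using 2
  rw [← Finset.sum_neg_distrib]
  refine Finset.sum_congr rfl fun i _ => ?_
  rw [smul_eq_mul]
  field_simp

lemma HasBohrMean.le_of_le_exp_neg_sum_mul_sin_sq {ι : Type*} {s : Finset ι} {w v : ι → ℝ}
    {f : ℝ → ℝ} {m : ℝ} (hf : HasBohrMean f m) (hw : ∀ i ∈ s, 0 ≤ w i)
    (hpos : 0 < ∑ i ∈ s, w i) (hv : ∀ i ∈ s, v i ≠ 0)
    (hle : ∀ t, f t ≤ exp (-∑ i ∈ s, w i * sin (v i * t) ^ 2)) :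
    m ≤ √(π / (4 * ∑ i ∈ s, w i)) := by
  obtain ⟨M, hM, hmean⟩ := exists_hasBohrMean_exp_neg_mul_sin_sq_le hpos
  have hcomb := HasBohrMean.sum fun i hi =>
    (hmean (v i) (hv i hi)).const_mul (w i / ∑ k ∈ s, w k)
  rw [← Finset.sum_mul, ← Finset.sum_div, div_self hpos.ne', one_mul] at hcomb
  exact (hf.mono hcomb fun t => (hle t).trans (exp_neg_sum_mul_le hw hpos _)).trans hM

lemma sum_cubeWeight_smul_prod {A : Type*} [CommRing A] [Algebra ℝ A] (n : ℕ) (p : Fin n → ℝ)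
    (f : Fin n → Bool → A) :
    ∑ x, cubeWeight n p x • ∏ j, f j (x j) =
      ∏ j, (p j • f j true + (1 - p j) • f j false) := by
  have hfactor (j : Fin n) : p j • f j true + (1 - p j) • f j false =
      ∑ b, (if b then p j else 1 - p j) • f j b := by simp
  simp_rw [hfactor, Finset.prod_univ_sum, Fintype.piFinset_univ, Finset.prod_smul, cubeWeight]

lemma sum_cubeWeight (n : ℕ) (p : Fin n → ℝ) : ∑ x, cubeWeight n p x = 1 := by
  simpa using sum_cubeWeight_smul_prod (A := ℝ) n p fun _ _ => 1

lemma sum_cubeWeight_succ_mul (n : ℕ) (p : Fin (n + 1) → ℝ) (F : (Fin (n + 1) → Bool) → ℝ) :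
    ∑ x, cubeWeight (n + 1) p x * F x =
      p 0 * ∑ y, cubeWeight n (Fin.tail p) y * F (Fin.cons true y) +
        (1 - p 0) * ∑ y, cubeWeight n (Fin.tail p) y * F (Fin.cons false y) := by
  rw [← (Fin.consEquiv fun _ => Bool).sum_comp, Fintype.sum_prod_type]
  simp [cubeWeight, Fin.prod_univ_succ, Fin.consEquiv, Fin.tail, Finset.mul_sum, mul_assoc]

lemma variance_sum_cubeWeight (n : ℕ) (p : Fin n → ℝ) (f : Fin n → Bool → ℝ) :
    ∑ x, cubeWeight n p x * (∑ j, f j (x j)) ^ 2 - (∑ x, cubeWeight n p x * ∑ j, f j (x j)) ^ 2 =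
      ∑ j, p j * (1 - p j) * (f j true - f j false) ^ 2 := by
  induction n with
  | zero => simp
  | succ n ih =>
    have htotal := sum_cubeWeight n (Fin.tail p)
    have hvar := ih (Fin.tail p) (Fin.tail f)
    have hmean (a : ℝ) (S : (Fin n → Bool) → ℝ) : ∑ y, cubeWeight n (Fin.tail p) y * (a + S y) =
        a + ∑ y, cubeWeight n (Fin.tail p) y * S y := by
      simp only [mul_add, Finset.sum_add_distrib, ← Finset.sum_mul, htotal, one_mul]
    have hsq (a : ℝ) (S : (Fin n → Bool) → ℝ) :
        ∑ y, cubeWeight n (Fin.tail p) y * (a + S y) ^ 2 =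
          a ^ 2 + (2 * a * ∑ y, cubeWeight n (Fin.tail p) y * S y +
            ∑ y, cubeWeight n (Fin.tail p) y * S y ^ 2) := by
      simp only [add_sq, add_assoc, hmean]
      simp only [mul_add, Finset.sum_add_distrib, Finset.mul_sum, mul_left_comm]
    simp only [Fin.tail] at hmean hsq hvar
    simp only [sum_cubeWeight_succ_mul, Fin.sum_univ_succ, Fin.cons_zero, Fin.cons_succ, hmean, hsq]
    linear_combination hvar

lemma variance_sum_signVec (n : ℕ) (p : Fin n → ℝ) :
    ∑ x, cubeWeight n p x * (∑ j, signVec n x j) ^ 2 -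
      (∑ x, cubeWeight n p x * ∑ j, signVec n x j) ^ 2 = ∑ j, 4 * (p j * (1 - p j)) := by
  refine (variance_sum_cubeWeight n p fun _ b => if b then 1 else -1).trans ?_
  refine Finset.sum_congr rfl fun j _ => ?_
  simp only [if_true, Bool.false_eq_true, if_false]
  ring

lemma norm_charFun_sign_le (p s : ℝ) :
    ‖p • Complex.exp (s * Complex.I) + (1 - p) • Complex.exp (-s * Complex.I)‖ ≤
      exp (-(2 * (p * (1 - p)) * sin s ^ 2)) := by
  have hparts : p • Complex.exp (s * Complex.I) + (1 - p) • Complex.exp (-s * Complex.I) =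
      (cos s : ℝ) + ((2 * p - 1) * sin s : ℝ) * Complex.I := by
    simp only [Complex.exp_mul_I, Complex.cos_neg, Complex.sin_neg, Complex.real_smul]
    push_cast
    ring
  rw [hparts, Complex.norm_add_mul_I]
  refine sqrt_le_iff.2 ⟨(exp_pos _).le, ?_⟩
  calc cos s ^ 2 + ((2 * p - 1) * sin s) ^ 2
      = -(4 * (p * (1 - p)) * sin s ^ 2) + 1 := by
        linear_combination sin_sq_add_cos_sq s
    _ ≤ exp (-(4 * (p * (1 - p)) * sin s ^ 2)) := add_one_le_exp _
    _ = exp (-(2 * (p * (1 - p)) * sin s ^ 2)) ^ 2 := by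
        rw [← exp_nat_mul]
        congr 1
        push_cast
        ring

lemma charFun_cubeWeight (n : ℕ) (p v : Fin n → ℝ) :
    ∑ x, cubeWeight n p x • Complex.exp ((∑ j, v j * signVec n x j : ℝ) * Complex.I) =
      ∏ j, (p j • Complex.exp (v j * Complex.I) + (1 - p j) • Complex.exp (-v j * Complex.I)) := by
  convert! sum_cubeWeight_smul_prod n p
    (fun j b => Complex.exp ((v j * if b then 1 else -1 : ℝ) * Complex.I)) using 4 with x _ j
  · rw [← Complex.exp_sum, ← Finset.sum_mul, ← Complex.ofReal_sum]
    rfl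
  all_goals simp

lemma sum_cubeWeight_mul_cos_le (n : ℕ) (p v : Fin n → ℝ) (θ : ℝ) :
    ∑ x, cubeWeight n p x * cos (∑ j, v j * signVec n x j - θ) ≤
      exp (-∑ j, 2 * (p j * (1 - p j)) * sin (v j) ^ 2) := by
  calc ∑ x, cubeWeight n p x * cos (∑ j, v j * signVec n x j - θ)
      = (Complex.exp ((-θ : ℝ) * Complex.I) * ∑ x, cubeWeight n p x •
          Complex.exp ((∑ j, v j * signVec n x j : ℝ) * Complex.I)).re := by
        rw [Finset.mul_sum, Complex.re_sum]
        refine Finset.sum_congr rfl fun x _ => ?_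
        rw [mul_smul_comm, ← Complex.exp_add, ← add_mul, ← Complex.ofReal_add, Complex.smul_re,
          Complex.exp_ofReal_mul_I_re, smul_eq_mul, neg_add_eq_sub]
    _ ≤ ∏ j, ‖p j • Complex.exp (v j * Complex.I) +
          (1 - p j) • Complex.exp (-v j * Complex.I)‖ := by
        refine (Complex.re_le_norm _).trans_eq ?_
        rw [norm_mul, Complex.norm_exp_ofReal_mul_I, one_mul, charFun_cubeWeight, norm_prod]
    _ ≤ ∏ j, exp (-(2 * (p j * (1 - p j)) * sin (v j) ^ 2)) :=
        Finset.prod_le_prod (fun _ _ => norm_nonneg _) fun j _ => norm_charFun_sign_le (p j) (v j)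
    _ = exp (-∑ j, 2 * (p j * (1 - p j)) * sin (v j) ^ 2) := by
        rw [← exp_sum, Finset.sum_neg_distrib]

theorem anticoncentration_product_measure_general (n : ℕ) (p : Fin n → ℝ)
    (hp : ∀ j, 0 ≤ p j ∧ p j ≤ 1) (v : Fin n → ℝ)
    (hpos : 0 < ∑ j with v j ≠ 0, 4 * (p j * (1 - p j))) (γ : ℝ) :
    ∑ x with ∑ j, v j * signVec n x j = γ, cubeWeight n p x ≤
      √(π / 2) / √(∑ j with v j ≠ 0, 4 * (p j * (1 - p j))) := by
  set w : Fin n → ℝ := fun j => 2 * (p j * (1 - p j))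
  have hw (j : Fin n) : 0 ≤ w j :=
    mul_nonneg zero_le_two (mul_nonneg (hp j).1 (sub_nonneg.2 (hp j).2))
  have hvar : ∑ j with v j ≠ 0, 4 * (p j * (1 - p j)) = 2 * ∑ j with v j ≠ 0, w j := by
    rw [Finset.mul_sum]
    exact Finset.sum_congr rfl fun j _ => by ring
  have hle (t : ℝ) : ∑ x, cubeWeight n p x * cos ((∑ j, v j * signVec n x j - γ) * t) ≤
      exp (-∑ j with v j ≠ 0, w j * sin (v j * t) ^ 2) := by
    have hsupport : ∀ j ∈ Finset.univ, w j * sin (v j * t) ^ 2 ≠ 0 → v j ≠ 0 :=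
      fun j _ hj hvj => hj (by simp [hvj])
    rw [Finset.sum_filter_of_ne hsupport]
    simpa only [sub_mul, Finset.sum_mul, mul_right_comm] using
      sum_cubeWeight_mul_cos_le n p (fun j => v j * t) (γ * t)
  calc ∑ x with ∑ j, v j * signVec n x j = γ, cubeWeight n p x
      ≤ √(π / (4 * ∑ j with v j ≠ 0, w j)) :=
        (HasBohrMean.sum_mul_cos _ _ γ).le_of_le_exp_neg_sum_mul_sin_sq (fun j _ => hw j)
          (by linarith) (by simp) hle
    _ = √(π / 2) / √(∑ j with v j ≠ 0, 4 * (p j * (1 - p j))) := by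
        rw [← sqrt_div (by positivity), hvar, div_div, ← mul_assoc]
        norm_num

/-- There is a constant `C > 0` such that for every product distribution `P` on `{−1,1}^n`
with `σ² > 0` the variance of `Σ_j z_j` for `z ∼ P`, every fully supported `v ∈ ℝⁿ`
and every `γ`, we have `Pr_{z∼P}[⟨v,z⟩ = γ] ≤ C/σ`. -/
theorem anticoncentration_product_measure :
    ∃ C : ℝ, 0 < C ∧
      ∀ (n : ℕ) (p : Fin n → ℝ), (∀ j, 0 ≤ p j ∧ p j ≤ 1) →
        ∀ σ2 : ℝ,
          σ2 = (∑ x : Fin n → Bool, cubeWeight n p x * (∑ j, signVec n x j) ^ 2) -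
              (∑ x : Fin n → Bool, cubeWeight n p x * (∑ j, signVec n x j)) ^ 2 →
          0 < σ2 →
          ∀ v : Fin n → ℝ, (∀ j, v j ≠ 0) →
            ∀ γ : ℝ,
              ∑ x ∈ Finset.univ.filter fun x : Fin n → Bool =>
                  ∑ j, v j * signVec n x j = γ, cubeWeight n p x
                ≤ C / Real.sqrt σ2 := by
  refine ⟨√(π / 2), by positivity, fun n p hp σ2 hσ hpos v hv γ => ?_⟩
  rw [variance_sum_signVec] at hσ
  subst hσ
  simpa [hv] using anticoncentration_product_measure_general n p hp v
    (by simpa [hv] using hpos) γ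
end

section
/- There exist constants C_0 > 1 and C_1 > 1 such that the following holds for every n. Let S = ⌊n^{0.001}⌋ and let v ∈ ℝ^n be a vector whose coordinate set can be partitioned into S parts, giving subvectors v^{(1)},…,v^{(S)}, such that ‖v^{(s)}‖_2 ≥ C_0 ‖v^{(s+1)}‖_2 for all s < S, and such that δ := ‖v^{(S)}‖_2 > 0. Then for every a ∈ ℝ and every b ≥ 2, Pr_{x∼{−1,1}^n}[ |⟨x,v⟩ − a| ≤ b·δ ] < C_1 · exp(−S/C_1 + C_1 · log b). -/
open scoped Classical

/-!
The potential `w ↦ V / (V + w ^ 2)` with `V = δ ^ 2` dominates the indicator of `|w| ≤ b * δ` up to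
the factor `1 + b ^ 2`. Let `X` be the signed sum of a subvector with squared norm `V`. If
`W ≥ 100 * V`, then the mean of the potential of squared width `V` at `u + X` is at most `0.99`
times the potential of squared width `W` at `u`: when `u ^ 2 ≥ 8 * V` since `X` has variance `V`,
and when `u ^ 2 ≤ 8 * V` since the second and fourth moments of `u + X` keep it from concentrating
near `0`. Averaging over the signs scale by scale, the smallest scale first, thus gains a factor
`0.99` for every scale but the largest.
-/

open Finset
open scoped BigOperators

section SignedSum

variable {ι : Type*} (v : ι → ℝ) (s : Finset ι)

/-- The squared Euclidean norm of the subvector of `v` with coordinate set `s`. -/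
def sqNorm : ℝ := ∑ j ∈ s, v j ^ 2

/-- The signed sum `∑ j ∈ s, ± v j`, where `ε j = true` stands for the sign `+`. -/
def signSum (ε : ι → Bool) : ℝ :=
  ∑ j ∈ s, (if ε j then (1 : ℝ) else -1) * v j

theorem sqNorm_nonneg : 0 ≤ sqNorm v s :=
  sum_nonneg fun _ _ => sq_nonneg _

variable {v s}

theorem sq_mul_sqNorm_le_of_mul_sqrt_le {t : Finset ι} {c : ℝ} (hc : 0 ≤ c)
    (h : c * √(sqNorm v s) ≤ √(sqNorm v t)) : c ^ 2 * sqNorm v s ≤ sqNorm v t := by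
  rw [← Real.sq_sqrt (sqNorm_nonneg v s), ← Real.sq_sqrt (sqNorm_nonneg v t), ← mul_pow]
  gcongr

variable [DecidableEq ι] {j : ι}

theorem signSum_insert (hj : j ∉ s) (ε : ι → Bool) :
    signSum v (insert j s) ε = (if ε j then (1 : ℝ) else -1) * v j + signSum v s ε :=
  sum_insert hj

theorem signSum_update_of_notMem (hj : j ∉ s) (ε : ι → Bool) (c : Bool) :
    signSum v s (Function.update ε j c) = signSum v s ε :=
  sum_congr rfl fun i hi => by rw [Function.update_of_ne (ne_of_mem_of_not_mem hi hj)]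

end SignedSum

section SignAverage

variable {ι : Type*} [Fintype ι] [DecidableEq ι] (v : ι → ℝ)

/-- The expectation of `h (u + X)`, where `X` is the sum of the `v j`, `j ∈ s`, with independent
uniform signs. The signs outside `s` are averaged over too, so that all `s` share one sample
space. -/
noncomputable def signAvg (s : Finset ι) (h : ℝ → ℝ) (u : ℝ) : ℝ :=
  𝔼 ε : ι → Bool, h (u + signSum v s ε)

theorem card_filter_div_eq_signAvg (p : ℝ → Prop) [DecidablePred p] (u : ℝ) :
    (#{ε : ι → Bool | p (u + signSum v univ ε)} : ℝ) / 2 ^ Fintype.card ι =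
      signAvg v univ (fun w => if p w then 1 else 0) u := by
  simp [signAvg, Fintype.expect_eq_sum_div_card]

variable (s : Finset ι) (u : ℝ)

theorem signAvg_mono {h k : ℝ → ℝ} (hk : ∀ w, h w ≤ k w) : signAvg v s h u ≤ signAvg v s k u :=
  expect_le_expect fun _ _ => hk _

theorem signAvg_const (c : ℝ) : signAvg v s (fun _ => c) u = c :=
  Fintype.expect_const c

theorem signAvg_add (h k : ℝ → ℝ) :
    signAvg v s (fun w => h w + k w) u = signAvg v s h u + signAvg v s k u :=
  expect_add_distrib ..

theorem signAvg_const_mul (c : ℝ) (h : ℝ → ℝ) :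
    signAvg v s (fun w => c * h w) u = c * signAvg v s h u :=
  (mul_expect ..).symm

theorem signAvg_empty (h : ℝ → ℝ) : signAvg v ∅ h u = h u := by
  simp [signAvg, signSum]

variable {s}

theorem signAvg_insert {j : ι} (hj : j ∉ s) (h : ℝ → ℝ) :
    signAvg v (insert j s) h u = (signAvg v s h (u + v j) + signAvg v s h (u - v j)) / 2 := by
  have flip_involutive :
      Function.Involutive fun ε : ι → Bool => Function.update ε j (!ε j) := fun ε => by simp
  have avg_flip : signAvg v (insert j s) h u =
      𝔼 ε : ι → Bool, h (u + signSum v (insert j s) (Function.update ε j (!ε j))) :=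
    (Fintype.expect_equiv flip_involutive.toPerm _ _ fun _ => rfl).symm
  have add_flip (ε : ι → Bool) :
      h (u + signSum v (insert j s) ε) +
          h (u + signSum v (insert j s) (Function.update ε j (!ε j))) =
        h (u + v j + signSum v s ε) + h (u - v j + signSum v s ε) := by
    rw [signSum_insert hj, signSum_insert hj, signSum_update_of_notMem hj,
      Function.update_self, ← add_assoc, ← add_assoc]
    cases ε j
    · simp [← sub_eq_add_neg, add_comm (h (u - v j + _))]
    · simp [← sub_eq_add_neg]
  rw [eq_div_iff two_ne_zero, mul_two]
  nth_rw 2 [avg_flip]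
  simp only [signAvg, ← expect_add_distrib, add_flip]

theorem signAvg_union {t : Finset ι} (hst : Disjoint s t) (h : ℝ → ℝ) :
    signAvg v (s ∪ t) h u = signAvg v s (signAvg v t h) u := by
  induction s using Finset.induction_on generalizing u with
  | empty => rw [empty_union, signAvg_empty]
  | insert j s hj ih =>
    obtain ⟨hjt, hst'⟩ := disjoint_insert_left.1 hst
    rw [insert_union, signAvg_insert v u (by simp [hj, hjt]), signAvg_insert v u hj]
    simp only [ih _ hst']

theorem signAvg_sub_sq (c : ℝ) :
    signAvg v s (fun w => (w - c) ^ 2) u = (u - c) ^ 2 + sqNorm v s := by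
  induction s using Finset.induction_on generalizing u with
  | empty => simp [signAvg_empty, sqNorm]
  | insert j s hj ih => simp only [signAvg_insert v _ hj, ih, sqNorm, sum_insert hj]; ring

theorem signAvg_sq : signAvg v s (fun w => w ^ 2) u = u ^ 2 + sqNorm v s := by
  simpa only [sub_zero] using signAvg_sub_sq v u 0

theorem signAvg_pow_four :
    signAvg v s (fun w => w ^ 4) u =
      u ^ 4 + 6 * u ^ 2 * sqNorm v s + 3 * sqNorm v s ^ 2 - 2 * ∑ j ∈ s, v j ^ 4 := by
  induction s using Finset.induction_on generalizing u with
  | empty => simp [signAvg_empty, sqNorm]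
  | insert j s hj ih => simp only [signAvg_insert v _ hj, ih, sqNorm, sum_insert hj]; ring

end SignAverage

section Lorentzian

/-- The potential `V / (V + w ^ 2)`: a Lorentzian bump of height `1` and squared width `V`. -/
noncomputable def lorentzian (V w : ℝ) : ℝ := V / (V + w ^ 2)

variable {V : ℝ}

theorem lorentzian_nonneg (hV : 0 ≤ V) (w : ℝ) : 0 ≤ lorentzian V w := by
  unfold lorentzian; positivity

theorem lorentzian_le_one (hV : 0 ≤ V) (w : ℝ) : lorentzian V w ≤ 1 :=
  div_le_one_of_le₀ (by linarith [sq_nonneg w]) (by positivity)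

theorem ite_abs_le_le_lorentzian {δ : ℝ} (hδ : δ ≠ 0) (b w : ℝ) :
    (if |w| ≤ b * δ then 1 else 0) ≤ (1 + b ^ 2) * lorentzian (δ ^ 2) w := by
  split_ifs with hw
  · have hw2 : w ^ 2 ≤ b ^ 2 * δ ^ 2 := by
      rw [← sq_abs, ← mul_pow]
      exact pow_le_pow_left₀ (abs_nonneg w) hw 2
    rw [lorentzian, ← mul_div_assoc, le_div_iff₀ (by positivity)]
    linarith
  · exact mul_nonneg (by positivity) (lorentzian_nonneg (sq_nonneg δ) w)

theorem lorentzian_le_quadratic {u : ℝ} (hV : 0 < V) (hu : u ≠ 0) (w : ℝ) :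
    lorentzian V w ≤ 2 * V / u ^ 2 + 2 / u ^ 2 * (w - u) ^ 2 := by
  have husq : u ^ 2 ≤ 2 * w ^ 2 + 2 * (w - u) ^ 2 := by nlinarith [sq_nonneg (2 * w - u)]
  have hprod : 0 ≤ w ^ 2 * (w - u) ^ 2 := by positivity
  rw [div_mul_eq_mul_div, ← add_div, lorentzian, div_le_div_iff₀ (by positivity) (by positivity)]
  nlinarith [sq_nonneg V]

theorem lorentzian_le_quartic (hV : 0 < V) (w : ℝ) :
    lorentzian V w ≤ -(1 / (10 * V)) * w ^ 2 + 1 / (360 * V ^ 2) * w ^ 4 + 1 := by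
  -- `10` and `360` make the difference nonnegative while keeping the mean of the quartic at `u + X`
  -- below `1` whenever `u ^ 2 + V`, the second moment of `u + X`, is at most `9 * V`.
  have hdiff : -(1 / (10 * V)) * w ^ 2 + 1 / (360 * V ^ 2) * w ^ 4 + 1 - lorentzian V w =
      w ^ 2 * ((w ^ 2 - 35 / 2 * V) ^ 2 + 71 / 4 * V ^ 2) / (360 * V ^ 2 * (V + w ^ 2)) := by
    unfold lorentzian
    field_simp
    ring
  refine sub_nonneg.1 (hdiff ▸ ?_)
  positivity

variable {ι : Type*} [Fintype ι] [DecidableEq ι] {v : ι → ℝ} {s : Finset ι} {u : ℝ}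

theorem signAvg_lorentzian_le_of_ne_zero (hs : 0 < sqNorm v s) (hu : u ≠ 0) :
    signAvg v s (lorentzian (sqNorm v s)) u ≤ 4 * sqNorm v s / u ^ 2 := by
  refine (signAvg_mono v s u (lorentzian_le_quadratic hs hu)).trans_eq ?_
  rw [signAvg_add, signAvg_const, signAvg_const_mul, signAvg_sub_sq]
  ring

theorem signAvg_lorentzian_le_of_sq_le (hs : 0 < sqNorm v s) (hu : u ^ 2 ≤ 8 * sqNorm v s) :
    signAvg v s (lorentzian (sqNorm v s)) u ≤ 0.91 := by
  refine (signAvg_mono v s u (lorentzian_le_quartic hs)).trans ?_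
  rw [signAvg_add, signAvg_add, signAvg_const_mul, signAvg_const_mul, signAvg_const, signAvg_sq,
    signAvg_pow_four]
  set V := sqNorm v s
  have hfour : 0 ≤ ∑ j ∈ s, v j ^ 4 := sum_nonneg fun _ _ => by positivity
  calc
    -(1 / (10 * V)) * (u ^ 2 + V) +
        1 / (360 * V ^ 2) * (u ^ 4 + 6 * u ^ 2 * V + 3 * V ^ 2 - 2 * ∑ j ∈ s, v j ^ 4) + 1
      ≤ -(1 / (10 * V)) * (u ^ 2 + V) + 1 / (360 * V ^ 2) * (3 * (u ^ 2 + V) ^ 2) + 1 := by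
        gcongr
        nlinarith [sq_nonneg (u ^ 2)]
    _ = (120 * V ^ 2 - 12 * V * (u ^ 2 + V) + (u ^ 2 + V) ^ 2) / (120 * V ^ 2) := by
        field_simp
        ring
    _ ≤ 0.91 := by
        rw [div_le_iff₀ (by positivity)]
        nlinarith [mul_nonneg (sq_nonneg u) (sub_nonneg.2 hu)]

theorem signAvg_lorentzian_le {W : ℝ} (hs : 0 < sqNorm v s) (hW : 100 * sqNorm v s ≤ W) :
    signAvg v s (lorentzian (sqNorm v s)) u ≤ 0.99 * lorentzian W u := by
  have hWpos : 0 < W := by linarith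
  rcases le_total (u ^ 2) (8 * sqNorm v s) with hnear | hfar
  · refine (signAvg_lorentzian_le_of_sq_le hs hnear).trans ?_
    rw [lorentzian, ← mul_div_assoc, le_div_iff₀ (by positivity)]
    linarith
  · have hu : u ≠ 0 := by rintro rfl; linarith
    refine (signAvg_lorentzian_le_of_ne_zero hs hu).trans ?_
    rw [lorentzian, ← mul_div_assoc, div_le_div_iff₀ (by positivity) (by positivity)]
    nlinarith [sq_nonneg u]

end Lorentzian

section ManyScales

theorem sqNorm_pos_of_growth {ι : Type*} {v : ι → ℝ} {T : ℕ → Finset ι} {k : ℕ}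
    (h0 : 0 < sqNorm v (T 0))
    (hgrowth : ∀ i < k, 100 * sqNorm v (T i) ≤ sqNorm v (T (i + 1))) : 0 < sqNorm v (T k) := by
  induction k with
  | zero => exact h0
  | succ k ih => linarith [hgrowth k k.lt_succ_self, ih fun i hi => hgrowth i (by omega)]

variable {ι : Type*} [Fintype ι] [DecidableEq ι] {v : ι → ℝ} {T : ℕ → Finset ι} {k : ℕ}

theorem signAvg_biUnion_lorentzian_le (hT : (Set.Iio k).PairwiseDisjoint T)
    (h0 : 0 < sqNorm v (T 0))
    (hgrowth : ∀ i < k, 100 * sqNorm v (T i) ≤ sqNorm v (T (i + 1))) (u : ℝ) :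
    signAvg v ((range k).biUnion T) (lorentzian (sqNorm v (T 0))) u ≤
      0.99 ^ k * lorentzian (sqNorm v (T k)) u := by
  induction k generalizing u with
  | zero => simp [signAvg_empty]
  | succ k ih =>
    have hdisj : Disjoint (T k) ((range k).biUnion T) := by
      refine (disjoint_biUnion_right _ _ _).2 fun i hi => ?_
      have hik : i < k := mem_range.1 hi
      exact hT k.lt_succ_self (hik.trans k.lt_succ_self) hik.ne'
    have hpos : 0 < sqNorm v (T k) := sqNorm_pos_of_growth h0 fun i hi => hgrowth i (by omega)
    calc
      _ = signAvg v (T k) (signAvg v ((range k).biUnion T) (lorentzian (sqNorm v (T 0)))) u := by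
        rw [range_add_one, biUnion_insert, signAvg_union v u hdisj]
      _ ≤ signAvg v (T k) (fun w => 0.99 ^ k * lorentzian (sqNorm v (T k)) w) u :=
        signAvg_mono v _ u <|
          ih (hT.subset <| Set.Iio_subset_Iio k.le_succ) fun i hi => hgrowth i (by omega)
      _ = 0.99 ^ k * signAvg v (T k) (lorentzian (sqNorm v (T k))) u := signAvg_const_mul ..
      _ ≤ 0.99 ^ k * (0.99 * lorentzian (sqNorm v (T (k + 1))) u) := by
        gcongr
        exact signAvg_lorentzian_le hpos (hgrowth k k.lt_succ_self)
      _ = 0.99 ^ (k + 1) * lorentzian (sqNorm v (T (k + 1))) u := by ring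

theorem card_abs_signSum_sub_le_div_le {δ : ℝ} (hT : (Set.Iio k).PairwiseDisjoint T)
    (hδ : δ ^ 2 = sqNorm v (T 0)) (hδ0 : δ ≠ 0)
    (hgrowth : ∀ i < k, 100 * sqNorm v (T i) ≤ sqNorm v (T (i + 1))) (a b : ℝ) :
    (#{ε : ι → Bool | |signSum v univ ε - a| ≤ b * δ} : ℝ) / 2 ^ Fintype.card ι ≤
      (1 + b ^ 2) * 0.99 ^ k := by
  set U := (range k).biUnion T
  have h0 : 0 < sqNorm v (T 0) := hδ ▸ by positivity
  have havg (u : ℝ) : signAvg v U (fun w => if |w| ≤ b * δ then 1 else 0) u ≤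
      (1 + b ^ 2) * 0.99 ^ k := by
    calc
      _ ≤ signAvg v U (fun w => (1 + b ^ 2) * lorentzian (sqNorm v (T 0)) w) u :=
        signAvg_mono v U u fun w => hδ ▸ ite_abs_le_le_lorentzian hδ0 b w
      _ = (1 + b ^ 2) * signAvg v U (lorentzian (sqNorm v (T 0))) u := signAvg_const_mul ..
      _ ≤ (1 + b ^ 2) * (0.99 ^ k * lorentzian (sqNorm v (T k)) u) := by
        gcongr
        exact signAvg_biUnion_lorentzian_le hT h0 hgrowth u
      _ ≤ (1 + b ^ 2) * 0.99 ^ k := by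
        gcongr
        exact mul_le_of_le_one_right (by positivity) (lorentzian_le_one (sqNorm_nonneg v _) u)
  calc
    _ = signAvg v univ (fun w => if |w| ≤ b * δ then 1 else 0) (-a) := by
      simp only [← card_filter_div_eq_signAvg, neg_add_eq_sub]
    _ = signAvg v Uᶜ (signAvg v U fun w => if |w| ≤ b * δ then 1 else 0) (-a) := by
      rw [← signAvg_union v _ disjoint_compl_left, union_comm, union_compl]
    _ ≤ signAvg v Uᶜ (fun _ => (1 + b ^ 2) * 0.99 ^ k) (-a) := signAvg_mono v _ _ havg
    _ = (1 + b ^ 2) * 0.99 ^ k := signAvg_const ..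

theorem one_add_sq_mul_pow_lt (S : ℕ) {b : ℝ} (hb : 1 ≤ b) :
    (1 + b ^ 2) * 0.99 ^ (S - 1) <
      100 * Real.exp (-(S : ℝ) / 100 + 100 * Real.log b) := by
  have hbase : (0.99 : ℝ) ≤ Real.exp (-1 / 100) := by
    linarith [Real.add_one_le_exp (-1 / 100 : ℝ)]
  have hS : (S : ℝ) ≤ (S - 1 : ℕ) + 1 := by exact_mod_cast (by omega : S ≤ S - 1 + 1)
  have hdecay : (0.99 : ℝ) ^ (S - 1) ≤ 3 * Real.exp (-(S : ℝ) / 100) := by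
    calc
      (0.99 : ℝ) ^ (S - 1) ≤ Real.exp (-1 / 100) ^ (S - 1) := by gcongr
      _ = Real.exp ((S - 1 : ℕ) * (-1 / 100)) := (Real.exp_nat_mul ..).symm
      _ ≤ Real.exp (1 + -(S : ℝ) / 100) := by gcongr; linarith
      _ = Real.exp 1 * Real.exp (-(S : ℝ) / 100) := Real.exp_add ..
      _ ≤ 3 * Real.exp (-(S : ℝ) / 100) := by gcongr; exact Real.exp_one_lt_three.le
  have hpow : Real.exp (100 * Real.log b) = b ^ 100 := by
    rw [mul_comm, ← Real.rpow_def_of_pos (by linarith)]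
    exact_mod_cast Real.rpow_natCast b 100
  have hpoly : (1 + b ^ 2) * 3 < 100 * b ^ 100 := by
    nlinarith [one_le_pow₀ hb (n := 100), pow_le_pow_right₀ hb (show 2 ≤ 100 by norm_num)]
  calc
    (1 + b ^ 2) * 0.99 ^ (S - 1) ≤ (1 + b ^ 2) * (3 * Real.exp (-(S : ℝ) / 100)) := by gcongr
    _ = (1 + b ^ 2) * 3 * Real.exp (-(S : ℝ) / 100) := by ring
    _ < 100 * b ^ 100 * Real.exp (-(S : ℝ) / 100) := by gcongr
    _ = 100 * Real.exp (-(S : ℝ) / 100 + 100 * Real.log b) := by rw [Real.exp_add, hpow]; ring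

theorem many_scales_anticoncentration_general :
    ∃ C0 : ℝ, 1 < C0 ∧ ∃ C1 : ℝ, 1 < C1 ∧
      ∀ {ι : Type*} [Fintype ι] [DecidableEq ι] (v : ι → ℝ) (S : ℕ) (part : ι → ℕ),
        (∀ s : ℕ, 1 ≤ s → s < S →
          C0 * √(∑ j with part j = s + 1, v j ^ 2) ≤ √(∑ j with part j = s, v j ^ 2)) →
        ∀ δ : ℝ, δ = √(∑ j with part j = S, v j ^ 2) → 0 < δ →
          ∀ a b : ℝ, 1 ≤ b →
            (#{ε : ι → Bool | |(∑ j, (if ε j then (1 : ℝ) else -1) * v j) - a| ≤ b * δ} : ℝ) /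
                2 ^ Fintype.card ι
              < C1 * Real.exp (-(S : ℝ) / C1 + C1 * Real.log b) := by
  refine ⟨10, by norm_num, 100, by norm_num, fun v S part hscale δ hδ hδ0 a b hb => ?_⟩
  have hdisj : (Set.Iio (S - 1)).PairwiseDisjoint fun i => ({j | part j = S - i} : Finset _) := by
    intro i (hi : i < S - 1) i' (hi' : i' < S - 1) hne
    exact disjoint_filter.2 fun j _ hj hj' => hne (by omega)
  have hδsq : δ ^ 2 = sqNorm v {j | part j = S - 0} := hδ ▸ Real.sq_sqrt (sqNorm_nonneg v _)
  have hgrowth : ∀ i < S - 1, 100 * sqNorm v ({j | part j = S - i} : Finset _) ≤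
      sqNorm v ({j | part j = S - (i + 1)} : Finset _) := by
    intro i hi
    have hstep := hscale (S - (i + 1)) (by omega) (by omega)
    rw [show S - (i + 1) + 1 = S - i by omega] at hstep
    linarith [sq_mul_sqNorm_le_of_mul_sqrt_le (by norm_num) hstep]
  exact (card_abs_signSum_sub_le_div_le hdisj hδsq hδ0.ne' hgrowth a b).trans_lt
    (one_add_sq_mul_pow_lt S hb)

end ManyScales

/-- Anti-concentration for vectors with many scales: there are constants `C₀ > 1` and
`C₁ > 1` such that if `v ∈ ℝⁿ` can be partitioned into `S = ⌊n^{0.001}⌋` subvectors with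
successive `ℓ₂`-norm ratios at least `C₀` and smallest scale `δ > 0`, then for every
`a ∈ ℝ` and `b ≥ 2`, a uniformly random sign vector `x` satisfies
`Pr[|⟨x,v⟩ − a| ≤ bδ] < C₁ exp(−S/C₁ + C₁ log b)`. -/
theorem many_scales_anticoncentration :
    ∃ C0 : ℝ, 1 < C0 ∧ ∃ C1 : ℝ, 1 < C1 ∧
      ∀ (n : ℕ) (v : Fin n → ℝ) (S : ℕ), S = ⌊(n : ℝ) ^ (0.001 : ℝ)⌋₊ →
        ∀ part : Fin n → ℕ, (∀ j, part j ∈ Finset.Icc 1 S) →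
          (∀ s : ℕ, 1 ≤ s → s < S →
            C0 * Real.sqrt (∑ j ∈ Finset.univ.filter fun j => part j = s + 1, v j ^ 2)
              ≤ Real.sqrt (∑ j ∈ Finset.univ.filter fun j => part j = s, v j ^ 2)) →
          ∀ δ : ℝ, δ = Real.sqrt (∑ j ∈ Finset.univ.filter fun j => part j = S, v j ^ 2) →
            0 < δ →
            ∀ a b : ℝ, 2 ≤ b →
              ((Finset.univ.filter fun ε : Fin n → Bool =>
                  |(∑ j, (if ε j then (1 : ℝ) else -1) * v j) - a| ≤ b * δ).card : ℝ) / 2 ^ n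
                < C1 * Real.exp (-(S : ℝ) / C1 + C1 * Real.log b) := by
  obtain ⟨C0, hC0, C1, hC1, hbound⟩ := many_scales_anticoncentration_general
  exact ⟨C0, hC0, C1, hC1, fun n v S _ part _ hscale δ hδ hδ0 a b hb => by
    simpa only [Fintype.card_fin] using hbound v S part hscale δ hδ hδ0 a b (by linarith)⟩
end

section
/- For every constant C_0 > 1 there exists n_0 such that for all n ≥ n_0 the following holds. Let V ∈ ℝ^{k×n} be a matrix with k ≤ n^{0.52} rows v_1,…,v_k. Then there is a partition of the rows [k] = L_1 ∪ L_2 and a partition of the columns [n] = M_1 ∪ M_2 with |M_2| ≤ n^{0.7171} such that: (1) if V' = (v'_{ij}) denotes the submatrix of V with rows L_1 and columns M_1 in which every nonzero row has been rescaled to have ℓ_2-norm one, then for every column j ∈ M_1, Σ_{i∈L_1} (v'_{ij})² < n^{−0.196}; and (2) for every row i ∈ L_2, the coordinates [n] of v_i can be partitioned into S = ⌊n^{0.001}⌋ parts, giving subvectors v_i^{(1)},…,v_i^{(S)} with ‖v_i^{(s)}‖_2 ≥ C_0 ‖v_i^{(s+1)}‖_2 for all s < S, such that the coordinate set of the last part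 v_i^{(S)} contains M_1. -/
open scoped Classical

/-!
Delete heavy columns one at a time, charging to every unfinished row `i` the amount
`w i j / ∑ j' ∈ M, w i j'` when column `j` is deleted from `M`, where `w i j = V i j ^ 2`. Each
deletion charges at least `δ` in total, so it is enough to bound the total charge to a single row.
Let `P` be the current smallest scale of the row. As long as the mass of `P` is at most `D + 1`
times the mass of `M`, the charges are dominated by the growth of `log (w(P) / w(M))`, hence add up
to at most `log (D + 1)`; the deletion that violates this bound costs at most `1` more and splits
`P` into two scales with ratio `D`. A row with `S` scales has therefore been charged at most
`S * (1 + log (D + 1))`. The order of the deletions is irrelevant: a minimal `M` among the column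
sets that admit a total charge of at least `δ * #Mᶜ` has no heavy column left.
-/

section

open Finset

lemma log_div_add_div_le_log_div_sub {p m x : ℝ} (hp : 0 < p) (hm : 0 < m) (hx : x < m) :
    Real.log (p / m) + x / m ≤ Real.log (p / (m - x)) := by
  have hmx : 0 < m - x := sub_pos.2 hx
  have hlog : Real.log (m - x) - Real.log m ≤ -(x / m) := by
    rw [← Real.log_div hmx.ne' hm.ne']
    refine (Real.log_le_sub_one_of_pos (div_pos hmx hm)).trans_eq ?_
    rw [sub_div, div_self hm.ne']
    ring
  rw [Real.log_div hp.ne' hm.ne', Real.log_div hp.ne' hmx.ne']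
  linarith

lemma eventually_rpow_mul_floor_rpow_mul_le {a b c d : ℝ} (B : ℝ) (habdc : a + b + d < c) :
    ∀ᶠ x : ℝ in .atTop, x ^ a * (⌊x ^ b⌋₊ * B) ≤ x ^ c * x ^ (-d) := by
  filter_upwards [(tendsto_rpow_atTop (sub_pos.2 habdc)).eventually_ge_atTop B,
    Filter.eventually_gt_atTop 0] with x hB hx
  calc x ^ a * (⌊x ^ b⌋₊ * B)
      ≤ x ^ a * (⌊x ^ b⌋₊ * x ^ (c - (a + b + d))) := by gcongr
    _ ≤ x ^ a * (x ^ b * x ^ (c - (a + b + d))) := by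
        gcongr
        exact Nat.floor_le (Real.rpow_nonneg hx.le b)
    _ = x ^ c * x ^ (-d) := by
        simp only [← Real.rpow_add hx]
        ring_nf

variable {ι : Type*} [Fintype ι] {w : ι → ℝ} {D E : ℝ} {c S : ℕ} {M M' P : Finset ι}

/-- The set `P` is the last of `S` consecutive scales of the weights `w`: the index set splits into
levels `1, …, S` whose masses drop at least by the factor `D` at each step, and `P` is level `S`.
Weights stand for squared coordinates, so a ratio `C₀` of Euclidean norms becomes `D = C₀ ^ 2`. -/
def IsSmallestScale (w : ι → ℝ) (D : ℝ) (S : ℕ) (P : Finset ι) : Prop :=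
  ∃ part : ι → ℕ, (∀ j, part j ∈ Icc 1 S) ∧
    (∀ s, 1 ≤ s → s < S → D * ∑ j with part j = s + 1, w j ≤ ∑ j with part j = s, w j) ∧
    ∀ j, part j = S ↔ j ∈ P

/-- The set `M` is contained in the smallest of `S` scales of the weights `w`. -/
def LiesInSmallestScale (w : ι → ℝ) (D : ℝ) (S : ℕ) (M : Finset ι) : Prop :=
  ∃ P, M ⊆ P ∧ IsSmallestScale w D S P

/-- The maximal total charge to a row during the lifetime of one scale: `log (D + 1)` while the
mass drops by the factor `D + 1`, and `1` for the deletion that completes the drop. -/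
noncomputable def scaleCost (D : ℝ) : ℝ := 1 + Real.log (D + 1)

/-- The invariant of the column deletion for a single row: the row may have been charged `E` by the
time the columns `M` are left. Either the row is finished, or `M` still carries a proportion of at
least `1 / (D + 1)` of the mass of its current smallest scale `P`. -/
def IsAdmissibleCharge (w : ι → ℝ) (D : ℝ) (S : ℕ) (M : Finset ι) (E : ℝ) : Prop :=
  E ≤ S * scaleCost D ∧
    (LiesInSmallestScale w D S M ∨
      ∃ c < S, ∃ P, M ⊆ P ∧ IsSmallestScale w D c P ∧
        0 < ∑ j ∈ M, w j ∧ ∑ j ∈ P, w j ≤ (D + 1) * ∑ j ∈ M, w j ∧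
        E ≤ c * scaleCost D + Real.log ((∑ j ∈ P, w j) / ∑ j ∈ M, w j))

lemma scaleCost_nonneg (hD : 0 ≤ D) : 0 ≤ scaleCost D :=
  add_nonneg zero_le_one (Real.log_nonneg (by linarith))

lemma LiesInSmallestScale.mono (h : LiesInSmallestScale w D S M) (hM : M' ⊆ M) :
    LiesInSmallestScale w D S M' := by
  obtain ⟨P, hMP, hP⟩ := h
  exact ⟨P, hM.trans hMP, hP⟩

lemma isSmallestScale_one_univ (w : ι → ℝ) (D : ℝ) : IsSmallestScale w D 1 univ :=
  ⟨fun _ => 1, by simp, fun s hs hs' => absurd hs' hs.not_gt, by simp⟩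

lemma IsSmallestScale.exists_part_sqrt {v : ι → ℝ} {C : ℝ}
    (h : IsSmallestScale (fun j => v j ^ 2) (C ^ 2) S P) :
    ∃ part : ι → ℕ, (∀ j, part j ∈ Icc 1 S) ∧
      (∀ s, 1 ≤ s → s < S →
        C * √(∑ j with part j = s + 1, v j ^ 2) ≤ √(∑ j with part j = s, v j ^ 2)) ∧
      ∀ j ∈ P, part j = S := by
  obtain ⟨part, hrange, hratio, hlast⟩ := h
  refine ⟨part, hrange, fun s hs hsS => Real.le_sqrt_of_sq_le ?_, fun j hj => (hlast j).2 hj⟩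
  rw [mul_pow, Real.sq_sqrt (sum_nonneg fun j _ => sq_nonneg (v j))]
  exact hratio s hs hsS

lemma IsSmallestScale.succ (hD : 0 ≤ D) (hw : ∀ j, 0 ≤ w j) (h : IsSmallestScale w D c P)
    (hMP : M ⊆ P) (hmass : (D + 1) * ∑ j ∈ M, w j ≤ ∑ j ∈ P, w j) :
    IsSmallestScale w D (c + 1) M := by
  obtain ⟨part, hrange, hratio, hlast⟩ := h
  simp only [mem_Icc] at hrange
  let part' : ι → ℕ := fun j => if j ∈ M then c + 1 else part j
  have part'_last : ∀ j, part' j = c + 1 ↔ j ∈ M := by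
    grind
  refine ⟨part', by grind, fun s hs hsc => ?_, part'_last⟩
  rcases (Nat.lt_succ_iff.1 hsc).lt_or_eq with hlt | rfl
  · have level_succ : univ.filter (part' · = s + 1) ⊆ univ.filter (part · = s + 1) := by
      grind
    have level_eq : univ.filter (part' · = s) = univ.filter (part · = s) := by
      grind
    calc D * ∑ j with part' j = s + 1, w j
        ≤ D * ∑ j with part j = s + 1, w j := by
          gcongr
          exact fun j _ _ => hw j
      _ ≤ ∑ j with part j = s, w j := hratio s hs hlt
      _ = ∑ j with part' j = s, w j := by rw [level_eq]
  · have level_last : univ.filter (part' · = s + 1) = M := by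
      grind
    have level_prev : univ.filter (part' · = s) = P \ M := by
      grind
    rw [level_last, level_prev]
    linarith [sum_sdiff hMP (f := w)]

lemma IsSmallestScale.of_sum_eq_zero (hD : 0 ≤ D) (hw : ∀ j, 0 ≤ w j)
    (h : IsSmallestScale w D c M) (hzero : ∑ j ∈ M, w j = 0) (hcS : c ≤ S) :
    IsSmallestScale w D S M := by
  induction S, hcS using Nat.le_induction with
  | base => exact h
  | succ S _ ih => exact ih.succ hD hw Subset.rfl (by rw [hzero, mul_zero])

lemma IsSmallestScale.isAdmissibleCharge (hD : 0 ≤ D) (hw : ∀ j, 0 ≤ w j)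
    (h : IsSmallestScale w D c M) (hcS : c ≤ S) (hE : E ≤ c * scaleCost D) :
    IsAdmissibleCharge w D S M E := by
  refine ⟨hE.trans (mul_le_mul_of_nonneg_right (by exact_mod_cast hcS) (scaleCost_nonneg hD)), ?_⟩
  have hnonneg : 0 ≤ ∑ j ∈ M, w j := sum_nonneg fun j _ => hw j
  rcases hcS.eq_or_lt with rfl | hlt
  · exact .inl ⟨M, Subset.rfl, h⟩
  rcases hnonneg.eq_or_lt with hzero | hpos
  · exact .inl ⟨M, Subset.rfl, h.of_sum_eq_zero hD hw hzero.symm hcS⟩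
  · exact .inr ⟨c, hlt, M, Subset.rfl, h, hpos, le_mul_of_one_le_left hnonneg (by linarith),
      by simpa [div_self hpos.ne'] using hE⟩

variable [DecidableEq ι]

lemma IsAdmissibleCharge.erase (hD : 0 ≤ D) (hw : ∀ j, 0 ≤ w j)
    (h : IsAdmissibleCharge w D S M E) (hM : ¬ LiesInSmallestScale w D S M) {j : ι} (hj : j ∈ M) :
    IsAdmissibleCharge w D S (M.erase j) (E + w j / ∑ j' ∈ M, w j') := by
  obtain ⟨c, hcS, P, hMP, hP, hpos, hle, hE⟩ := h.2.resolve_left hM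
  have herase : M.erase j ⊆ P := (erase_subset j M).trans hMP
  have hsum : ∑ j' ∈ M.erase j, w j' = ∑ j' ∈ M, w j' - w j := sum_erase_eq_sub hj
  have hPpos : 0 < ∑ j' ∈ P, w j' :=
    hpos.trans_le (sum_le_sum_of_subset_of_nonneg hMP fun j' _ _ => hw j')
  have hfrac : w j / ∑ j' ∈ M, w j' ≤ 1 :=
    div_le_one_of_le₀ (single_le_sum (fun j' _ => hw j') hj) hpos.le
  have hlog : Real.log ((∑ j' ∈ P, w j') / ∑ j' ∈ M, w j') ≤ Real.log (D + 1) :=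
    Real.log_le_log (div_pos hPpos hpos) ((div_le_iff₀ hpos).2 hle)
  have hcharge : E + w j / ∑ j' ∈ M, w j' ≤ (c + 1 : ℕ) * scaleCost D := by
    rw [Nat.cast_succ, add_one_mul]
    unfold scaleCost at hE ⊢
    linarith
  rcases le_or_gt ((D + 1) * ∑ j' ∈ M.erase j, w j') (∑ j' ∈ P, w j') with hdrop | hkeep
  · exact (hP.succ hD hw herase hdrop).isAdmissibleCharge hD hw hcS hcharge
  · have hpos' : 0 < ∑ j' ∈ M.erase j, w j' :=
      pos_of_mul_pos_right (hPpos.trans hkeep) (by linarith)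
    refine ⟨hcharge.trans ?_, .inr ⟨c, hcS, P, herase, hP, hpos', hkeep.le, ?_⟩⟩
    · exact mul_le_mul_of_nonneg_right (by exact_mod_cast hcS) (scaleCost_nonneg hD)
    · rw [hsum] at hpos' ⊢
      linarith [log_div_add_div_le_log_div_sub hPpos hpos (sub_pos.1 hpos')]

lemma exists_light_columns {κ : Type*} [Fintype κ] {w : κ → ι → ℝ} (hD : 0 ≤ D)
    (hw : ∀ i j, 0 ≤ w i j) (hS : 1 ≤ S) (δ : ℝ) :
    ∃ M : Finset ι, #Mᶜ * δ ≤ Fintype.card κ * (S * scaleCost D) ∧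
      ∀ j ∈ M, ∑ i with ¬ LiesInSmallestScale (w i) D S M, w i j / ∑ j' ∈ M, w i j' < δ := by
  let Reachable (M : Finset ι) : Prop :=
    ∃ E : κ → ℝ, (∀ i, IsAdmissibleCharge (w i) D S M (E i)) ∧ #Mᶜ * δ ≤ ∑ i, E i
  have reachable_univ : Reachable univ :=
    ⟨0, fun i => (isSmallestScale_one_univ (w i) D).isAdmissibleCharge hD (hw i) hS
      (by simpa using scaleCost_nonneg hD), by simp⟩
  obtain ⟨M, ⟨E, hE, hsum⟩, hmin⟩ := exists_minimal_of_wellFoundedLT Reachable ⟨_, reachable_univ⟩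
  refine ⟨M, hsum.trans ?_, fun j hj => ?_⟩
  · simpa using sum_le_sum fun i (_ : i ∈ univ) => (hE i).1
  by_contra! hheavy
  let E' (i : κ) : ℝ :=
    E i + if ¬ LiesInSmallestScale (w i) D S M then w i j / ∑ j' ∈ M, w i j' else 0
  have admissible : ∀ i, IsAdmissibleCharge (w i) D S (M.erase j) (E' i) := by
    intro i
    by_cases hi : LiesInSmallestScale (w i) D S M
    · simpa [E', hi] using ⟨(hE i).1, Or.inl (hi.mono (erase_subset j M))⟩
    · simpa [E', hi] using (hE i).erase hD (hw i) hi hj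
  have reachable_erase : Reachable (M.erase j) := by
    refine ⟨E', admissible, ?_⟩
    rw [compl_erase, card_insert_of_notMem (by simpa using hj), sum_add_distrib, ← sum_filter,
      Nat.cast_succ, add_one_mul]
    exact add_le_add hsum hheavy
  exact notMem_erase j M (hmin reachable_erase (erase_subset j M) hj)

theorem decomposition_lemma_general (C0 : ℝ) {a b c d : ℝ} (hb : 0 ≤ b) (habdc : a + b + d < c) :
    ∃ n0 : ℕ, ∀ n : ℕ, n0 ≤ n → ∀ (k : ℕ) (V : Fin k → Fin n → ℝ),
      (k : ℝ) ≤ (n : ℝ) ^ a →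
      ∃ (L1 L2 : Finset (Fin k)) (M1 M2 : Finset (Fin n)),
        Disjoint L1 L2 ∧ L1 ∪ L2 = univ ∧ Disjoint M1 M2 ∧ M1 ∪ M2 = univ ∧
        (#M2 : ℝ) ≤ (n : ℝ) ^ c ∧
        (∀ j ∈ M1, ∑ i ∈ L1, (V i j / √(∑ j' ∈ M1, V i j' ^ 2)) ^ 2 < (n : ℝ) ^ (-d)) ∧
        ∀ i ∈ L2, ∃ part : Fin n → ℕ,
          (∀ j, part j ∈ Icc 1 ⌊(n : ℝ) ^ b⌋₊) ∧
          (∀ s : ℕ, 1 ≤ s → s < ⌊(n : ℝ) ^ b⌋₊ →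
            C0 * √(∑ j with part j = s + 1, V i j ^ 2) ≤ √(∑ j with part j = s, V i j ^ 2)) ∧
          ∀ j ∈ M1, part j = ⌊(n : ℝ) ^ b⌋₊ := by
  obtain ⟨n0, hn0⟩ := Filter.eventually_atTop.1
    ((eventually_rpow_mul_floor_rpow_mul_le (scaleCost (C0 ^ 2)) habdc).natCast_atTop.and
      (Filter.eventually_ge_atTop 1))
  refine ⟨n0, fun n hn k V hk => ?_⟩
  obtain ⟨hcost, hn_one⟩ := hn0 n hn
  have hS : 1 ≤ ⌊(n : ℝ) ^ b⌋₊ :=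
    Nat.le_floor (by simpa using Real.one_le_rpow (by exact_mod_cast hn_one) hb)
  obtain ⟨M, hcard, hlight⟩ := exists_light_columns (w := fun i j => V i j ^ 2) (sq_nonneg C0)
    (fun i j => sq_nonneg (V i j)) hS ((n : ℝ) ^ (-d))
  refine ⟨({i | ¬ LiesInSmallestScale (fun j => V i j ^ 2) (C0 ^ 2) ⌊(n : ℝ) ^ b⌋₊ M} : Finset _),
    _, M, Mᶜ, disjoint_compl_right, union_compl _, disjoint_compl_right, union_compl M,
    ?_, fun j hj => ?_, fun i hi => ?_⟩
  · refine le_of_mul_le_mul_right (hcard.trans (le_trans ?_ hcost)) (by positivity)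
    have hcost_nonneg := scaleCost_nonneg (sq_nonneg C0)
    rw [Fintype.card_fin]
    gcongr
  · simpa only [div_pow, Real.sq_sqrt (sum_nonneg fun j' _ => sq_nonneg (V _ j'))]
      using hlight j hj
  · obtain ⟨P, hMP, hP⟩ : LiesInSmallestScale (fun j => V i j ^ 2) (C0 ^ 2) ⌊(n : ℝ) ^ b⌋₊ M := by
      simpa using hi
    obtain ⟨part, hrange, hratio, hlast⟩ := hP.exists_part_sqrt
    exact ⟨part, hrange, hratio, fun j hj => hlast j (hMP hj)⟩

end

/-- The decomposition lemma: for every constant `C₀ > 1`, for all large `n`, every matrix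
`V ∈ ℝ^{k×n}` with `k ≤ n^{0.52}` admits a partition of its rows `[k] = L₁ ∪ L₂` and of its
columns `[n] = M₁ ∪ M₂` with `|M₂| ≤ n^{0.7171}` such that:
(1) normalizing each nonzero row of the `L₁ × M₁` submatrix to unit `ℓ₂`-norm, every column
`j ∈ M₁` has squared mass less than `n^{−0.196}`; and
(2) every row in `L₂` has many scales (with ratio constant `C₀` and `S = ⌊n^{0.001}⌋` parts),
and the position of its smallest scale contains `M₁`. -/
theorem decomposition_lemma (C0 : ℝ) (hC0 : 1 < C0) :
    ∃ n0 : ℕ, ∀ n : ℕ, n0 ≤ n → ∀ (k : ℕ) (V : Fin k → Fin n → ℝ),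
      (k : ℝ) ≤ (n : ℝ) ^ (0.52 : ℝ) →
      ∃ (L1 L2 : Finset (Fin k)) (M1 M2 : Finset (Fin n)),
        Disjoint L1 L2 ∧ L1 ∪ L2 = Finset.univ ∧
        Disjoint M1 M2 ∧ M1 ∪ M2 = Finset.univ ∧
        (M2.card : ℝ) ≤ (n : ℝ) ^ (0.7171 : ℝ) ∧
        (∀ j ∈ M1,
          ∑ i ∈ L1, (V i j / Real.sqrt (∑ j' ∈ M1, V i j' ^ 2)) ^ 2
            < (n : ℝ) ^ (-(0.196 : ℝ))) ∧
        (∀ i ∈ L2, ∃ part : Fin n → ℕ,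
          (∀ j, part j ∈ Finset.Icc 1 ⌊(n : ℝ) ^ (0.001 : ℝ)⌋₊) ∧
          (∀ s : ℕ, 1 ≤ s → s < ⌊(n : ℝ) ^ (0.001 : ℝ)⌋₊ →
            C0 * Real.sqrt (∑ j ∈ Finset.univ.filter fun j => part j = s + 1, V i j ^ 2)
              ≤ Real.sqrt (∑ j ∈ Finset.univ.filter fun j => part j = s, V i j ^ 2)) ∧
          (∀ j ∈ M1, part j = ⌊(n : ℝ) ^ (0.001 : ℝ)⌋₊)) :=
  decomposition_lemma_general C0 (by norm_num) (by norm_num)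
end
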